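/- arXiv:0802.2651 — 4 statements merged into one kernel-verified Lean document; each statement's English description precedes it below -/
import Mathlib

section
/- Let N be a positive squarefree integer and let P be a non-torsion integral point of E_N(ℚ). Then there is at most one integer n > 1 such that nP is integral; that is, if n₁ > 1 and n₂ > 1 are integers such that both n₁P and n₂P are integral points, then n₁ = n₂. -/
/-- The congruent number curve `E_N : y² = x³ - N²x` over `ℚ`. -/
def congruentCurve (N : ℕ) : WeierstrassCurve.Affine ℚ :=
  { a₁ := 0, a₂ := 0, a₃ := 0, a₄ := -(N : ℚ) ^ 2, a₆ := 0 }

/-- A rational point on a Weierstrass curve over `ℚ` is integral if it is an affine point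
whose `x`-coordinate is an integer. -/
def IsIntegralPoint {W : WeierstrassCurve.Affine ℚ} (P : W.Point) : Prop :=
  ∃ (x y : ℚ) (h : W.Nonsingular x y),
    P = WeierstrassCurve.Affine.Point.some x y h ∧ x.den = 1

/-!
Write `x(Q) = N * a / b` in lowest terms. If `Q` is a double, then `a` is odd and `b` is even, and
the formulas for `x(Q₁ + Q₂)` and `x(Q₁ - Q₂)` show that `2`-adically `log a` and `b / a` are both
multiplied by `n ^ 2`, to leading order, when `Q` is replaced by `n • Q`. Doubling repeatedly makes
the error terms vanish, so in the limit the ratio of `log a` to `b / a` is the same for `P` and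
`n • P`. If `P` and `n • P` are integral, then their denominators `b` coincide and their numerators
are congruent modulo `4`, so the two doubles belong to a family parametrised by a single integer
`z`, in which that ratio is a `2`-adic power series. If `b` is even, its first divided differences
do not vanish, so `z` is determined by the ratio and no multiple other than `P` is integral. If `b`
is odd, its second divided differences do not vanish, so besides the value of `z` that belongs to
`P` there is at most one more.
-/

section TwoAdicLog

variable {R S : Type*} [CommRing R] [CommRing S] {k : ℕ} {x y l l' : R}

/-- `l` is the 2-adic logarithm of `x` to precision `2 ^ k`, read off from
`x ^ 2 ^ k = exp (2 ^ k * log x) ≡ 1 + 2 ^ k * log x`. -/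
def HasLog (k : ℕ) (x l : R) : Prop :=
  (2 ^ k) ^ 2 ∣ x ^ 2 ^ k - (1 + 2 ^ k * l)

lemma HasLog.mul (hx : HasLog k x l) (hy : HasLog k y l') : HasLog k (x * y) (l + l') := by
  obtain ⟨c, hc⟩ := hx
  obtain ⟨d, hd⟩ := hy
  refine ⟨l * l' + c * y ^ 2 ^ k + (1 + 2 ^ k * l) * d, ?_⟩
  rw [mul_pow]
  linear_combination y ^ 2 ^ k * hc + (1 + 2 ^ k * l) * hd

lemma HasLog.pow (hx : HasLog k x l) (m : ℕ) : HasLog k (x ^ m) (m * l) := by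
  induction m with
  | zero => simp [HasLog]
  | succ m ih =>
    rw [pow_succ, Nat.cast_succ, add_one_mul]
    exact ih.mul hx

lemma two_pow_mul_dvd_add_two_mul_pow_sub (x d : R) (k : ℕ) :
    2 ^ k * (2 * d) ∣ (x + 2 * d) ^ 2 ^ k - x ^ 2 ^ k := by
  induction k with
  | zero => simp
  | succ k ih =>
    have hsum : 2 ∣ (x + 2 * d) ^ 2 ^ k + x ^ 2 ^ k := by
      have := ((dvd_mul_right 2 _).trans ((Dvd.intro_left _ rfl).trans ih)).add
        (dvd_mul_right 2 (x ^ 2 ^ k))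
      convert this using 1
      ring
    have hsq : (x + 2 * d) ^ 2 ^ (k + 1) - x ^ 2 ^ (k + 1) =
        ((x + 2 * d) ^ 2 ^ k + x ^ 2 ^ k) * ((x + 2 * d) ^ 2 ^ k - x ^ 2 ^ k) := by ring
    rw [hsq, pow_succ', mul_assoc]
    exact mul_dvd_mul hsum ih

lemma HasLog.add_two_mul (hx : HasLog k x l) (d : R) :
    ∃ c, HasLog k (x + 2 * d) (l + 2 * d * c) := by
  obtain ⟨c, hc⟩ := two_pow_mul_dvd_add_two_mul_pow_sub x d k
  obtain ⟨t, ht⟩ := hx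
  exact ⟨c, t, by linear_combination ht + hc⟩

lemma HasLog.map (f : R →+* S) (hx : HasLog k x l) : HasLog k (f x) (f l) := by
  simpa only [HasLog, map_pow, map_ofNat, map_sub, map_add, map_one, map_mul] using map_dvd f hx

lemma hasLog_one_add_eight_mul (k : ℕ) (x : R) :
    ∃ p, HasLog k (1 + 8 * x) (8 * (x + 4 * p)) := by
  suffices ∃ p, (1 + 8 * x) ^ 2 ^ k = 1 + 2 ^ k * (8 * (x + 4 * p)) by
    obtain ⟨p, hp⟩ := this
    exact ⟨p, by simp [HasLog, hp]⟩
  induction k with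
  | zero => exact ⟨0, by simp⟩
  | succ k ih =>
    obtain ⟨p, hp⟩ := ih
    refine ⟨p + 2 ^ k * (x + 4 * p) ^ 2, ?_⟩
    have hsq : (1 + 8 * x) ^ 2 ^ (k + 1) = ((1 + 8 * x) ^ 2 ^ k) ^ 2 := by ring
    rw [hsq, hp]
    ring

lemma HasLog.dvd_sub [IsDomain R] [NeZero (2 : R)] (h : HasLog k x l) (h' : HasLog k x l') :
    2 ^ k ∣ l - l' := by
  have key : 2 ^ k * 2 ^ k ∣ 2 ^ k * (l - l') := by
    have := Dvd.dvd.sub h' h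
    convert this using 1 <;> ring
  exact (mul_dvd_mul_iff_left (pow_ne_zero k two_ne_zero)).1 key

lemma HasLog.dvd_sub_of_dvd_sub_pow [IsDomain R] [NeZero (2 : R)] (hk : k ≠ 0) {m : ℕ}
    (hx : HasLog k x l) (hy : HasLog k y l') (hxy : 2 ^ k ∣ x - y ^ m) : 2 ^ k ∣ l - m * l' := by
  obtain ⟨j, rfl⟩ := Nat.exists_eq_add_one_of_ne_zero hk
  obtain ⟨d, hd⟩ := hxy
  obtain ⟨c, hc⟩ := (hy.pow m).add_two_mul (2 ^ j * d)
  have hx' : y ^ m + 2 * (2 ^ j * d) = x := by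
    rw [← mul_assoc, ← pow_succ', ← hd, add_sub_cancel]
  rw [hx'] at hc
  convert (hx.dvd_sub hc).add (Dvd.intro (d * c) rfl) using 1
  ring

end TwoAdicLog

section Duplication

variable {R S : Type*} [CommRing R] [CommRing S]

/-- The duplication map of the congruent number curve: if `x(Q) = N * a / b`, then
`x(2 • Q) = N * (a ^ 2 + b ^ 2) ^ 2 / (4 * a * b * (a ^ 2 - b ^ 2))`. -/
def dup (p : R × R) : R × R :=
  ((p.1 ^ 2 + p.2 ^ 2) ^ 2, 4 * p.1 * p.2 * (p.1 ^ 2 - p.2 ^ 2))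

lemma map_iterate_dup (f : R →+* S) (n : ℕ) (p : R × R) :
    dup^[n] (f p.1, f p.2) = (f (dup^[n] p).1, f (dup^[n] p).2) := by
  have h : Function.Semiconj (Prod.map f f) dup dup := fun p => by
    simp only [dup, Prod.map, map_pow, map_add, map_sub, map_mul, map_ofNat]
  exact (h.iterate_right n p).symm

variable {u w e : R}

lemma exists_iterate_dup_eq (he : u ^ 2 + (2 * w) ^ 2 = 1 + 4 * e) (i : ℕ) :
    ∃ r q, dup^[i + 1] (u, 2 * w) = (1 + 4 * r, 2 ^ (2 * i + 3) * (w * (u ^ 3 + 4 * q))) := by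
  induction i with
  | zero =>
    refine ⟨2 * e + 4 * e ^ 2, -(u * w ^ 2), ?_⟩
    simp only [zero_add, Function.iterate_one, dup, he, Prod.mk.injEq]
    constructor <;> ring
  | succ i ih =>
    obtain ⟨r, q, h⟩ := ih
    set b := 2 ^ (2 * i + 2) * (w * (u ^ 3 + 4 * q)) with hb
    have hb2 : 2 ^ (2 * i + 3) * (w * (u ^ 3 + 4 * q)) = 2 * b := by rw [hb]; ring
    set s := 2 * r + 4 * r ^ 2 + b ^ 2 with hs
    refine ⟨2 * s + 4 * s ^ 2,
      q + (u ^ 3 + 4 * q) * (r + (1 + 4 * r) * (2 * r + 4 * r ^ 2 - b ^ 2)), ?_⟩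
    rw [Function.iterate_succ_apply', h, hb2]
    simp only [dup, Prod.mk.injEq]
    constructor
    · rw [hs]; ring
    · rw [show 4 * (1 + 4 * r) * (2 * b) = 4 * (1 + 4 * r) *
        (2 ^ (2 * i + 3) * (w * (u ^ 3 + 4 * q))) by rw [hb2]]
      ring

lemma exists_hasLog_iterate_dup (he : u ^ 2 + (2 * w) ^ 2 = 1 + 4 * e) (k i : ℕ) :
    ∃ p, HasLog k (dup^[i + 1] (u, 2 * w)).1 (2 ^ (2 * i + 3) * (e + 2 * e ^ 2 + 4 * p)) := by
  induction i with
  | zero =>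
    obtain ⟨p, hp⟩ := hasLog_one_add_eight_mul k (e + 2 * e ^ 2)
    refine ⟨p, ?_⟩
    convert hp using 1
    · simp only [zero_add, Function.iterate_one, dup, he]; ring
    · norm_num
  | succ i ih =>
    obtain ⟨p, hp⟩ := ih
    obtain ⟨r, q, h⟩ := exists_iterate_dup_eq he i
    rw [Function.iterate_succ_apply']
    rw [h] at hp ⊢
    set W := w * (u ^ 3 + 4 * q)
    obtain ⟨c, hc⟩ := (hp.pow 2).add_two_mul (2 ^ (4 * i + 5) * W ^ 2)
    refine ⟨p + 2 ^ (2 * i) * W ^ 2 * c, ?_⟩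
    convert hc.pow 2 using 1
    · simp only [dup]; ring
    · ring

end Duplication

section Scaling

open Polynomial

/-- To precision `M`, both `log a` and `b / a` get multiplied by `m` in passing from the pair
`p₀ = (a₀, b₀)` to the pair `p = (a, b)`. -/
structure ScalesBy (M : ℤ) (m : ℕ) (p₀ p : ℤ × ℤ) : Prop where
  dvd_snd : M ∣ p.2
  dvd_fst_sub_pow : M ^ 2 ∣ p.1 - p₀.1 ^ m
  dvd_cross_sub : M ^ 3 ∣ p.2 * p₀.1 - m * p₀.2 * p.1

/-- The iterated doubles of `p₀` and `p` scale by `m`, to a precision growing with the number of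
doublings. -/
def IterScalesBy (m : ℕ) (p₀ p : ℤ × ℤ) : Prop :=
  ∀ i : ℕ, ScalesBy (2 ^ (2 * i + 3)) m (dup^[i + 1] p₀) (dup^[i + 1] p)

lemma ScalesBy.dvd_log_mul_sub {k m : ℕ} {a₀ a w₀ w l₀ l : ℤ} (hk : k ≠ 0)
    (h : ScalesBy (2 ^ k) m (a₀, 2 ^ k * w₀) (a, 2 ^ k * w))
    (h₀ : HasLog (2 * k) a₀ (2 ^ k * l₀)) (hl : HasLog (2 * k) a (2 ^ k * l)) :
    2 ^ k ∣ l * a * w₀ - l₀ * a₀ * w := by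
  have hpow : (2 : ℤ) ^ k ≠ 0 := by positivity
  have hlog : 2 ^ k ∣ l - m * l₀ := by
    have := hl.dvd_sub_of_dvd_sub_pow (by lia) h₀ (m := m)
      (by rw [mul_comm 2 k, pow_mul]; exact h.dvd_fst_sub_pow)
    rw [two_mul, pow_add] at this
    refine (mul_dvd_mul_iff_left hpow).1 (this.trans (dvd_of_eq ?_))
    ring
  have hratio : 2 ^ k ∣ w * a₀ - m * w₀ * a := by
    refine (mul_dvd_mul_iff_left hpow).1 (dvd_trans ⟨2 ^ k, by ring⟩
      (h.dvd_cross_sub.trans (dvd_of_eq ?_)))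
    ring
  exact (dvd_sub (hlog.mul_right (w₀ * a)) (hratio.mul_right l₀)).trans (dvd_of_eq (by ring))

lemma exists_dvd_eval_mul_eval_sub {u w e : ℤ[X]} (he : u ^ 2 + (2 * w) ^ 2 = 1 + 4 * e) (i : ℕ) :
    ∃ p q : ℤ[X], ∀ z₀ z m,
      IterScalesBy m (u.eval z₀, 2 * w.eval z₀) (u.eval z, 2 * w.eval z) →
      2 ^ (2 * i + 3) ∣
        (e + 2 * e ^ 2 + 4 * p).eval z * (w * (u ^ 3 + 4 * q)).eval z₀ -
          (e + 2 * e ^ 2 + 4 * p).eval z₀ * (w * (u ^ 3 + 4 * q)).eval z := by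
  obtain ⟨r, q, hiter⟩ := exists_iterate_dup_eq he i
  obtain ⟨p, hlog⟩ := exists_hasLog_iterate_dup he (2 * (2 * i + 3)) i
  rw [hiter] at hlog
  set W := w * (u ^ 3 + 4 * q)
  set g := e + 2 * e ^ 2 + 4 * p
  have hpair (z : ℤ) : dup^[i + 1] (u.eval z, 2 * w.eval z) =
      (1 + 4 * r.eval z, 2 ^ (2 * i + 3) * W.eval z) := by
    have := map_iterate_dup (evalRingHom z) (i + 1) (u, 2 * w)
    rw [hiter] at this
    simpa using this
  have hlog_eval (z : ℤ) :
      HasLog (2 * (2 * i + 3)) (1 + 4 * r.eval z) (2 ^ (2 * i + 3) * g.eval z) := by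
    simpa using hlog.map (evalRingHom z)
  have hgr : e + 2 * e ^ 2 + 4 * (p + g * r) = g * (1 + 4 * r) := by ring
  refine ⟨p + g * r, q, fun z₀ z m h => ?_⟩
  have hi := h i
  rw [hpair, hpair] at hi
  rw [hgr]
  convert hi.dvd_log_mul_sub (by lia) (hlog_eval z₀) (hlog_eval z) using 3 <;> simp

section Expansion

variable {R : Type*} [CommRing R] {β c : R}

lemma sq_add_two_mul_sq_eq (hβ : β ^ 2 = 1 + 4 * c) (ρ x : R) :
    (β + 2 * ρ * x) ^ 2 + (2 * x) ^ 2 = 1 + 4 * (c + ρ * β * x + (ρ ^ 2 + 1) * x ^ 2) := by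
  linear_combination hβ

lemma exists_log_expansion (hβ : β ^ 2 = 1 + 4 * c) (ρ x p : R) :
    ∃ P, (c + ρ * β * x + (ρ ^ 2 + 1) * x ^ 2) +
        2 * (c + ρ * β * x + (ρ ^ 2 + 1) * x ^ 2) ^ 2 + 4 * p =
      c + 2 * c ^ 2 + ρ * β * x + (3 * ρ ^ 2 + 1) * x ^ 2 + 2 * (ρ ^ 2 + 1) ^ 2 * x ^ 4 + 4 * P :=
  ⟨p + c * ρ * β * x + (c * (ρ ^ 2 + 1) + 2 * ρ ^ 2 * c) * x ^ 2 + ρ * β * (ρ ^ 2 + 1) * x ^ 3,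
    by linear_combination 2 * ρ ^ 2 * x ^ 2 * hβ⟩

lemma exists_cube_expansion (hβ : β ^ 2 = 1 + 4 * c) (ρ x q : R) :
    ∃ Q, x * ((β + 2 * ρ * x) ^ 3 + 4 * q) = β ^ 3 * x + 2 * ρ * x ^ 2 + 4 * Q :=
  ⟨(ρ + 6 * c * ρ) * x ^ 2 + 3 * β * ρ ^ 2 * x ^ 3 + 2 * ρ ^ 3 * x ^ 4 + x * q,
    by linear_combination 6 * ρ * x ^ 2 * hβ⟩

lemma exists_log_expansion_even (c α x p : R) :
    ∃ P, (c + 2 * α * x + 4 * x ^ 2) + 2 * (c + 2 * α * x + 4 * x ^ 2) ^ 2 + 4 * p =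
      c + 2 * c ^ 2 + 2 * α * x + 4 * P :=
  ⟨p + x ^ 2 + 2 * c * α * x + (4 * c + 2 * α ^ 2) * x ^ 2 + 8 * α * x ^ 3 + 8 * x ^ 4, by ring⟩

lemma exists_cube_expansion_even (α b x q : R) :
    ∃ Q, b * ((α + 4 * x) ^ 3 + 4 * q) = b * α ^ 3 + 4 * Q :=
  ⟨b * (3 * α ^ 2 * x + 12 * α * x ^ 2 + 16 * x ^ 3 + q), by ring⟩

end Expansion

lemma exists_newton_form (p : ℤ[X]) (x₀ x₁ x₂ : ℤ) :
    ∃ p₀₁ p₀₁₂, p.eval x₁ = p.eval x₀ + (x₁ - x₀) * p₀₁ ∧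
      p.eval x₂ = p.eval x₀ + (x₂ - x₀) * (p₀₁ + (x₂ - x₁) * p₀₁₂) := by
  obtain ⟨q, hq⟩ : X - C x₀ ∣ p - C (p.eval x₀) := X_sub_C_dvd_sub_C_eval
  obtain ⟨r, hr⟩ := q.sub_dvd_eval_sub x₂ x₁
  have hp (x : ℤ) : p.eval x = p.eval x₀ + (x - x₀) * q.eval x := by
    have := congrArg (eval x) hq
    simp only [eval_sub, eval_mul, eval_X, eval_C] at this
    rw [← this, add_sub_cancel]
  exact ⟨q.eval x₁, r, hp x₁, by rw [hp x₂, ← hr, add_sub_cancel]⟩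

lemma dvd_mul_of_dvd_newton_forms {d z₀ z₁ z₂ g g₀₁ g₀₁₂ w w₀₁ w₀₁₂ : ℤ}
    (h₁ : d ∣ (g + (z₁ - z₀) * g₀₁) * w - g * (w + (z₁ - z₀) * w₀₁))
    (h₂ : d ∣ (g + (z₂ - z₀) * (g₀₁ + (z₂ - z₁) * g₀₁₂)) * w -
      g * (w + (z₂ - z₀) * (w₀₁ + (z₂ - z₁) * w₀₁₂))) :
    d ∣ (g₀₁ * w₀₁₂ - w₀₁ * g₀₁₂) * w * ((z₁ - z₀) * (z₂ - z₀) * (z₂ - z₁)) := by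
  refine ((h₁.mul_right ((z₂ - z₀) * ((z₂ - z₁) * w₀₁₂ + w₀₁))).sub
    (h₂.mul_right ((z₁ - z₀) * w₀₁))).trans (dvd_of_eq ?_)
  ring

lemma eq_zero_of_forall_two_pow_dvd {M : ℤ}
    (h : ∀ i : ℕ, ∃ D, ¬ 4 ∣ D ∧ 2 ^ (2 * i + 3) ∣ D * M) : M = 0 := by
  by_contra hM
  obtain ⟨n, hn⟩ : FiniteMultiplicity 2 M := Int.finiteMultiplicity_iff.2 ⟨by decide, hM⟩
  obtain ⟨D, hD, hdvd⟩ := h n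
  refine hn (dvd_trans (pow_dvd_pow 2 (by lia)) (?_ : 2 ^ (2 * n + 2) ∣ M))
  rcases Int.even_or_odd' D with ⟨D', rfl | rfl⟩
  · rw [pow_succ', mul_assoc] at hdvd
    exact Int.prime_two.pow_dvd_of_dvd_mul_left _ (by lia)
      ((mul_dvd_mul_iff_left two_ne_zero).1 hdvd)
  · exact Int.prime_two.pow_dvd_of_dvd_mul_left _ (by lia)
      ((pow_dvd_pow 2 (by lia)).trans hdvd)

-- The determinant of first and second divided differences of the polynomials on the right of
-- `exists_log_expansion` and `exists_cube_expansion`.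
lemma not_four_dvd_det {β ρ : ℤ} (hβ : Odd β) (s t h a b c d : ℤ) :
    ¬ 4 ∣ (ρ * β + (3 * ρ ^ 2 + 1) * s + 2 * (ρ ^ 2 + 1) ^ 2 * t + 4 * a) * (2 * ρ + 4 * b) -
      (β ^ 3 + 2 * ρ * s + 4 * c) * (3 * ρ ^ 2 + 1 + 2 * (ρ ^ 2 + 1) ^ 2 * h + 4 * d) := by
  rcases Int.even_or_odd' ρ with ⟨r, rfl | rfl⟩
  · have hodd : Odd ((β ^ 3 + 2 * (2 * r) * s + 4 * c) *
        (3 * (2 * r) ^ 2 + 1 + 2 * ((2 * r) ^ 2 + 1) ^ 2 * h + 4 * d)) := by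
      refine Odd.mul ?_ ⟨6 * r ^ 2 + ((2 * r) ^ 2 + 1) ^ 2 * h + 2 * d, by ring⟩
      rw [add_assoc]
      exact hβ.pow.add_even ⟨2 * r * s + 2 * c, by ring⟩
    intro h4
    refine Int.not_even_iff_odd.2 (Even.sub_odd (Even.mul_left ⟨2 * r + 2 * b, by ring⟩ _) hodd)
      (even_iff_two_dvd.2 (dvd_trans (by norm_num) h4))
  · obtain ⟨n, hn⟩ : Odd ((2 * r + 1) ^ 2 * β) := Odd.mul (odd_two_mul_add_one r).pow hβ
    set ρ := 2 * r + 1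
    set k := 3 * r ^ 2 + 3 * r + 1
    set l := 2 * (2 * r ^ 2 + 2 * r + 1) ^ 2
    have h3 : 3 * ρ ^ 2 + 1 = 4 * k := by ring
    have h1 : 2 * (ρ ^ 2 + 1) ^ 2 = 4 * l := by ring
    rw [h3, h1]
    rintro ⟨x, hx⟩
    suffices 2 = 4 * (x - n - (ρ * β * b + (k * s + l * t + a) * (2 * ρ + 4 * b) -
      (β ^ 3 + 2 * ρ * s + 4 * c) * (k + l * h + d))) by omega
    linear_combination hx - 2 * hn

lemma exists_dvd_det_mul {β ρ C d z₀ z₁ z₂ : ℤ} {P Q G W : ℤ[X]} (hβ : Odd β)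
    (hG : ∀ z, G.eval z = C + ρ * β * z + (3 * ρ ^ 2 + 1) * z ^ 2 + 2 * (ρ ^ 2 + 1) ^ 2 * z ^ 4 +
      4 * P.eval z)
    (hW : ∀ z, W.eval z = β ^ 3 * z + 2 * ρ * z ^ 2 + 4 * Q.eval z)
    (h₁ : d ∣ G.eval z₁ * W.eval z₀ - G.eval z₀ * W.eval z₁)
    (h₂ : d ∣ G.eval z₂ * W.eval z₀ - G.eval z₀ * W.eval z₂) :
    ∃ D, ¬ 4 ∣ D ∧ d ∣ D * W.eval z₀ * ((z₁ - z₀) * (z₂ - z₀) * (z₂ - z₁)) := by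
  obtain ⟨a, a', ha, ha'⟩ := exists_newton_form P z₀ z₁ z₂
  obtain ⟨b, b', hb, hb'⟩ := exists_newton_form Q z₀ z₁ z₂
  set s := z₀ + z₁ with hs
  set t := (z₀ + z₁) * (z₀ ^ 2 + z₁ ^ 2) with ht
  set h := z₀ ^ 2 + z₁ ^ 2 + z₂ ^ 2 + z₀ * z₁ + z₀ * z₂ + z₁ * z₂ with hh
  set G₀₁ := ρ * β + (3 * ρ ^ 2 + 1) * s + 2 * (ρ ^ 2 + 1) ^ 2 * t + 4 * a with hG₀₁
  set G₀₁₂ := 3 * ρ ^ 2 + 1 + 2 * (ρ ^ 2 + 1) ^ 2 * h + 4 * a' with hG₀₁₂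
  set W₀₁ := β ^ 3 + 2 * ρ * s + 4 * b with hW₀₁
  set W₀₁₂ := 2 * ρ + 4 * b' with hW₀₁₂
  have hG₁ : G.eval z₁ = G.eval z₀ + (z₁ - z₀) * G₀₁ := by
    rw [hG, hG, ha, hG₀₁, hs, ht]; ring
  have hG₂ : G.eval z₂ = G.eval z₀ + (z₂ - z₀) * (G₀₁ + (z₂ - z₁) * G₀₁₂) := by
    rw [hG, hG, ha', hG₀₁, hG₀₁₂, hs, ht, hh]; ring
  have hW₁ : W.eval z₁ = W.eval z₀ + (z₁ - z₀) * W₀₁ := by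
    rw [hW, hW, hb, hW₀₁, hs]; ring
  have hW₂ : W.eval z₂ = W.eval z₀ + (z₂ - z₀) * (W₀₁ + (z₂ - z₁) * W₀₁₂) := by
    rw [hW, hW, hb', hW₀₁, hW₀₁₂, hs]; ring
  rw [hG₁, hW₁] at h₁
  rw [hG₂, hW₂] at h₂
  exact ⟨_, not_four_dvd_det hβ s t h a b' b a', dvd_mul_of_dvd_newton_forms h₁ h₂⟩

lemma eq_zero_of_iterScalesBy_of_odd {β ρ z₀ z₁ z₂ : ℤ} (hβ : Odd β) {m₁ m₂ : ℕ}
    (h₁ : IterScalesBy m₁ (β + 2 * ρ * z₀, 2 * z₀) (β + 2 * ρ * z₁, 2 * z₁))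
    (h₂ : IterScalesBy m₂ (β + 2 * ρ * z₀, 2 * z₀) (β + 2 * ρ * z₂, 2 * z₂)) :
    z₀ * ((z₁ - z₀) * (z₂ - z₀) * (z₂ - z₁)) = 0 := by
  obtain ⟨c, hc⟩ : ∃ c, β ^ 2 = 1 + 4 * c := by
    obtain ⟨b, rfl⟩ := hβ
    exact ⟨b ^ 2 + b, by ring⟩
  have hβsq : (β : ℤ[X]) ^ 2 = 1 + 4 * (c : ℤ[X]) := mod_cast congrArg (Int.cast : ℤ → ℤ[X]) hc
  refine eq_zero_of_forall_two_pow_dvd fun i => ?_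
  obtain ⟨p, q, hpq⟩ := exists_dvd_eval_mul_eval_sub (sq_add_two_mul_sq_eq hβsq ρ X) i
  have hdvd₁ := hpq z₀ z₁ m₁ (by simpa using h₁)
  have hdvd₂ := hpq z₀ z₂ m₂ (by simpa using h₂)
  obtain ⟨P, hP⟩ := exists_log_expansion hβsq ρ X p
  obtain ⟨Q, hQ⟩ := exists_cube_expansion hβsq ρ X q
  obtain ⟨D, hD, hdvd⟩ := exists_dvd_det_mul hβ (ρ := ρ) (C := c + 2 * c ^ 2) (P := P) (Q := Q)
    (fun z => by simp [hP]) (fun z => by simp [hQ]) hdvd₁ hdvd₂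
  have hodd : Odd ((β + 2 * ρ * z₀) ^ 3 + 4 * q.eval z₀) :=
    (hβ.add_even ⟨ρ * z₀, by ring⟩).pow.add_even ⟨2 * q.eval z₀, by ring⟩
  refine ⟨D * ((β + 2 * ρ * z₀) ^ 3 + 4 * q.eval z₀), fun h4 => hD ?_, hdvd.trans ?_⟩
  · exact ((Int.isCoprime_two_left.2 hodd).pow_left (m := 2)).dvd_of_dvd_mul_right h4
  · simp [mul_comm, mul_assoc, mul_left_comm]

lemma eq_of_iterScalesBy_of_even {α b z₀ z₁ : ℤ} (hα : Odd α) (hb : Odd b) {m : ℕ}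
    (h : IterScalesBy m (α + 4 * z₀, 2 * b) (α + 4 * z₁, 2 * b)) : z₁ = z₀ := by
  obtain ⟨c, hc⟩ : ∃ c, α ^ 2 + 4 * b ^ 2 = 1 + 4 * c := by
    obtain ⟨a, rfl⟩ := hα
    exact ⟨a ^ 2 + a + b ^ 2, by ring⟩
  have hcX : (α : ℤ[X]) ^ 2 + 4 * (b : ℤ[X]) ^ 2 = 1 + 4 * (c : ℤ[X]) :=
    mod_cast congrArg (Int.cast : ℤ → ℤ[X]) hc
  have he : ((α : ℤ[X]) + 4 * X) ^ 2 + (2 * (b : ℤ[X])) ^ 2 =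
      1 + 4 * ((c : ℤ[X]) + 2 * (α : ℤ[X]) * X + 4 * X ^ 2) := by
    linear_combination hcX
  refine sub_eq_zero.1 (eq_zero_of_forall_two_pow_dvd fun i => ?_)
  obtain ⟨p, q, hpq⟩ := exists_dvd_eval_mul_eval_sub he i
  have hdvd := hpq z₀ z₁ m (by simpa using h)
  obtain ⟨P, hP⟩ := exists_log_expansion_even (c : ℤ[X]) α X p
  obtain ⟨Q, hQ⟩ := exists_cube_expansion_even (α : ℤ[X]) b X q
  rw [hP, hQ] at hdvd
  obtain ⟨P₀₁, hP₀₁⟩ := P.sub_dvd_eval_sub z₁ z₀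
  obtain ⟨Q₀₁, hQ₀₁⟩ := Q.sub_dvd_eval_sub z₁ z₀
  simp only [eval_add, eval_mul, eval_pow, eval_intCast, eval_ofNat, eval_X] at hdvd
  set G₀ := c + 2 * c ^ 2 + 2 * α * z₀ + 4 * P.eval z₀
  set W₀ := b * α ^ 3 + 4 * Q.eval z₀
  refine ⟨(2 * α + 4 * P₀₁) * W₀ - G₀ * (4 * Q₀₁), ?_, hdvd.trans (dvd_of_eq ?_)⟩
  · have hW₀ : Odd W₀ := (hb.mul hα.pow).add_even ⟨2 * Q.eval z₀, by ring⟩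
    obtain ⟨n, hn⟩ := hα.mul hW₀
    rintro ⟨x, hx⟩
    suffices 2 = 4 * (x - n - (P₀₁ * W₀ - G₀ * Q₀₁)) by omega
    linear_combination hx - 2 * hn
  · linear_combination 4 * W₀ * hP₀₁ - 4 * G₀ * hQ₀₁

end Scaling

section Primitive

lemma isUnit_of_dvd_mul_of_dvd_add_of_dvd_mul {R : Type*} [CommRing R] {a b c d p : R}
    (hab : IsCoprime a b) (hcd : IsCoprime c d) (hac : p ∣ a * c) (hadd : p ∣ a * d + b * c)
    (hbd : p ∣ b * d) : IsUnit p := by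
  obtain ⟨r, s, hrs⟩ := hcd
  have ha : p ∣ a ^ 2 := by
    have hc : p ∣ a ^ 2 * c := (hac.mul_left a).trans (dvd_of_eq (by ring))
    have hd : p ∣ a ^ 2 * d :=
      ((hadd.mul_left a).sub (hac.mul_left b)).trans (dvd_of_eq (by ring))
    convert (hc.mul_left r).add (hd.mul_left s) using 1
    linear_combination -a ^ 2 * hrs
  have hb : p ∣ b ^ 2 := by
    have hd : p ∣ b ^ 2 * d := (hbd.mul_left b).trans (dvd_of_eq (by ring))
    have hc : p ∣ b ^ 2 * c :=
      ((hadd.mul_left b).sub (hbd.mul_left a)).trans (dvd_of_eq (by ring))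
    convert (hc.mul_left r).add (hd.mul_left s) using 1
    linear_combination -b ^ 2 * hrs
  exact hab.pow.isUnit_of_dvd' ha hb

variable {a b c d p : ℤ}

lemma isUnit_of_dvd_sum_of_dvd_diff (hab : IsCoprime a b) (hcd : IsCoprime c d)
    (hodd : Odd (a * c + b * d)) (hsum : p ∣ (a * c + b * d) ^ 2)
    (hmid : p ∣ 2 * (a * d + b * c) * (a * c - b * d)) (hdiff : p ∣ (a * d - b * c) ^ 2) :
    IsUnit p := by
  by_contra hp
  obtain ⟨q, hq, hqp⟩ := Int.exists_prime_and_dvd (Int.isUnit_iff_natAbs_eq.not.1 hp)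
  have hs := hq.dvd_of_dvd_pow (hqp.trans hsum)
  have hd := hq.dvd_of_dvd_pow (hqp.trans hdiff)
  have hq2 : ¬ q ∣ 2 := fun h => hq.not_isUnit
    ((Int.isCoprime_two_left.2 hodd).isUnit_of_dvd' h hs)
  have half {x y : ℤ} (hx : q ∣ x) (hy : 2 * y = x) : q ∣ y :=
    (hq.dvd_or_dvd (hy ▸ hx)).resolve_left hq2
  rcases hq.dvd_or_dvd (hqp.trans hmid) with h | h
  · replace h := (hq.dvd_or_dvd h).resolve_left hq2
    exact hq.not_isUnit (isUnit_of_dvd_mul_of_dvd_add_of_dvd_mul hab hcd.symm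
      (half (h.add hd) (by ring)) hs (half (h.sub hd) (by ring)))
  · refine hq.not_isUnit (isUnit_of_dvd_mul_of_dvd_add_of_dvd_mul hab hcd.symm.neg_left.symm
      (half (hs.add h) (by ring)) (?_) (half (h.sub hs) (by ring)))
    exact hd.neg_right.trans (dvd_of_eq (by ring))

lemma dvd_of_proportional {ι : Type*} [Finite ι] {v f : ι → ℤ} {k : ι}
    (hv : ∀ p, (∀ i, p ∣ v i) → IsUnit p) (h : ∀ i, v i * f k = f i * v k) : v k ∣ f k := by
  cases nonempty_fintype ι
  have hgcd : v k ∣ Finset.univ.gcd fun i => v i * f k :=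
    Finset.dvd_gcd fun i _ => ⟨f i, by rw [h i, mul_comm]⟩
  rw [Finset.gcd_mul_right] at hgcd
  exact dvd_normalize_iff.1
    ((hv _ fun i => Finset.gcd_dvd (Finset.mem_univ i)).dvd_mul_left.1 hgcd)

lemma eq_of_proportional {ι : Type*} [Finite ι] {v f : ι → ℤ} {k : ι} (hvk : 0 < v k)
    (hfk : 0 < f k) (hv : ∀ p, (∀ i, p ∣ v i) → IsUnit p) (hf : ∀ p, (∀ i, p ∣ f i) → IsUnit p)
    (h : ∀ i, v i * f k = f i * v k) : v = f := by
  have hk : v k = f k := Int.dvd_antisymm hvk.le hfk.le (dvd_of_proportional hv h)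
    (dvd_of_proportional hf fun i => (h i).symm)
  funext i
  exact mul_right_cancel₀ hfk.ne' (hk ▸ h i)

lemma isCoprime_dup {q : ℤ × ℤ} (h : IsCoprime q.1 q.2) (h₁ : Odd q.1) (h₂ : Even q.2) :
    IsCoprime (dup q).1 (dup q).2 := by
  refine isRelPrime_iff_isCoprime.1 fun p hp₁ hp₂ =>
    isUnit_of_dvd_sum_of_dvd_diff h h ((h₁.mul h₁).add_even (h₂.mul_left _)) ?_ ?_ ?_
  · exact hp₁.trans (dvd_of_eq (by simp only [dup]; ring))
  · exact hp₂.trans (dvd_of_eq (by simp only [dup]; ring))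
  · exact (dvd_zero p).trans (dvd_of_eq (by ring))

end Primitive

section XRatio

open WeierstrassCurve.Affine

variable {N : ℕ}

lemma sq_eq_of_nonsingular {x y : ℚ} (h : (congruentCurve N).Nonsingular x y) :
    y ^ 2 = x ^ 3 - N ^ 2 * x := by
  have := (equation_iff _ _).1 h.1
  simp only [congruentCurve] at this
  linear_combination this

lemma exists_neg_some_eq {x y : ℚ} (h : (congruentCurve N).Nonsingular x y) :
    ∃ h', -Point.some x y h = Point.some x (-y) h' := by
  have hneg : (congruentCurve N).negY x y = -y := by simp [negY, congruentCurve]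
  exact ⟨hneg ▸ (nonsingular_neg x y).2 h, by simp only [Point.neg_some, hneg]⟩

lemma two_nsmul_some_zero {x : ℚ} (h : (congruentCurve N).Nonsingular x 0) :
    (2 : ℕ) • Point.some x 0 h = 0 := by
  rw [two_nsmul]
  exact Point.add_self_of_Y_eq (by simp [negY, congruentCurve])

lemma fst_eq_of_two_nsmul_some_eq {x y x' y' : ℚ} {h : (congruentCurve N).Nonsingular x y}
    {h' : (congruentCurve N).Nonsingular x' y'}
    (heq : (2 : ℕ) • Point.some x y h = Point.some x' y' h') :
    y ≠ 0 ∧ x' = ((x ^ 2 + N ^ 2) / (2 * y)) ^ 2 := by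
  have hy : y ≠ 0 := by
    rintro rfl
    exact Point.some_ne_zero h' (heq.symm.trans (two_nsmul_some_zero h))
  have hsub : y - (congruentCurve N).negY x y = 2 * y := by simp [negY, congruentCurve, two_mul]
  have hne : y ≠ (congruentCurve N).negY x y :=
    sub_ne_zero.1 (hsub ▸ mul_ne_zero two_ne_zero hy)
  rw [two_nsmul, Point.add_self_of_Y_ne hne, Point.some.injEq, slope_of_Y_ne rfl hne, hsub] at heq
  refine ⟨hy, heq.1 ▸ ?_⟩
  simp only [addX, congruentCurve]
  have := sq_eq_of_nonsingular h
  field_simp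
  linear_combination -8 * x * this

lemma exists_add_some_eq {x₁ y₁ x₂ y₂ : ℚ} (h₁ : (congruentCurve N).Nonsingular x₁ y₁)
    (h₂ : (congruentCurve N).Nonsingular x₂ y₂) (hx : x₁ ≠ x₂) :
    ∃ x y h, Point.some x₁ y₁ h₁ + Point.some x₂ y₂ h₂ = Point.some x y h ∧
      x * (x₁ - x₂) ^ 2 = (y₁ - y₂) ^ 2 - (x₁ + x₂) * (x₁ - x₂) ^ 2 := by
  rw [Point.add_of_X_ne hx]
  refine ⟨_, _, _, rfl, ?_⟩
  rw [slope_of_X_ne hx]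
  simp only [addX, congruentCurve]
  have := sub_ne_zero.2 hx
  field_simp
  ring

lemma fst_ne_of_add_ne_zero_of_sub_ne_zero {x₁ y₁ x₂ y₂ : ℚ}
    {h₁ : (congruentCurve N).Nonsingular x₁ y₁} {h₂ : (congruentCurve N).Nonsingular x₂ y₂}
    (hadd : Point.some x₁ y₁ h₁ + Point.some x₂ y₂ h₂ ≠ 0)
    (hsub : Point.some x₁ y₁ h₁ - Point.some x₂ y₂ h₂ ≠ 0) : x₁ ≠ x₂ := by
  intro hx
  rcases (Point.X_eq_iff (h₁ := h₁) (h₂ := h₂)).1 hx with h | h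
  · exact hsub (sub_eq_zero.2 h)
  · exact hadd (eq_neg_iff_add_eq_zero.1 h)

lemma exists_add_sub_some_eq {x₁ y₁ x₂ y₂ : ℚ} (h₁ : (congruentCurve N).Nonsingular x₁ y₁)
    (h₂ : (congruentCurve N).Nonsingular x₂ y₂) (hx : x₁ ≠ x₂) :
    ∃ x y h x' y' h', Point.some x₁ y₁ h₁ + Point.some x₂ y₂ h₂ = Point.some x y h ∧
      Point.some x₁ y₁ h₁ - Point.some x₂ y₂ h₂ = Point.some x' y' h' ∧
      x * x' * (x₁ - x₂) ^ 2 = (x₁ * x₂ + N ^ 2) ^ 2 ∧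
      (x + x') * (x₁ - x₂) ^ 2 = 2 * (x₁ + x₂) * (x₁ * x₂ - N ^ 2) := by
  obtain ⟨h₂', hneg⟩ := exists_neg_some_eq h₂
  obtain ⟨x, y, h, hadd, e⟩ := exists_add_some_eq h₁ h₂ hx
  obtain ⟨x', y', h', hsub, e'⟩ := exists_add_some_eq h₁ h₂' hx
  rw [← hneg, ← sub_eq_add_neg] at hsub
  refine ⟨x, y, h, x', y', h', hadd, hsub, ?_, ?_⟩
  · refine mul_right_cancel₀ (pow_ne_zero 2 (sub_ne_zero.2 hx)) ?_
    calc x * x' * (x₁ - x₂) ^ 2 * (x₁ - x₂) ^ 2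
        = (x * (x₁ - x₂) ^ 2) * (x' * (x₁ - x₂) ^ 2) := by ring
      _ = (y₁ ^ 2 - y₂ ^ 2) ^ 2 - 2 * (x₁ + x₂) * (x₁ - x₂) ^ 2 * (y₁ ^ 2 + y₂ ^ 2) +
          ((x₁ + x₂) * (x₁ - x₂) ^ 2) ^ 2 := by rw [e, e']; ring
      _ = (x₁ * x₂ + N ^ 2) ^ 2 * (x₁ - x₂) ^ 2 := by
        rw [sq_eq_of_nonsingular h₁, sq_eq_of_nonsingular h₂]; ring
  · linear_combination e + e' + 2 * sq_eq_of_nonsingular h₁ + 2 * sq_eq_of_nonsingular h₂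

/-- `Q` is an affine point of `E_N` with `x(Q) / N = p.1 / p.2`, a fraction in lowest terms with
positive denominator. -/
structure HasXRatio (Q : (congruentCurve N).Point) (p : ℤ × ℤ) : Prop where
  isCoprime : IsCoprime p.1 p.2
  pos : 0 < p.2
  exists_eq_some : ∃ x y h, Q = Point.some x y h ∧ x * p.2 = N * p.1

variable {Q Q₁ Q₂ : (congruentCurve N).Point} {p q : ℤ × ℤ}

lemma HasXRatio.ne_zero (h : HasXRatio Q p) : Q ≠ 0 := by
  obtain ⟨x, y, hxy, rfl, -⟩ := h.exists_eq_some
  exact Point.some_ne_zero hxy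

lemma exists_hasXRatio (hN : N ≠ 0) (hQ : Q ≠ 0) : ∃ p, HasXRatio Q p := by
  match Q, hQ with
  | Point.some x y h, _ =>
    refine ⟨((x / N).num, (x / N).den), Rat.isCoprime_num_den _, Int.natCast_pos.2 (x / N).den_pos,
      x, y, h, rfl, ?_⟩
    have hN' : (N : ℚ) ≠ 0 := Nat.cast_ne_zero.2 hN
    rw [← Rat.mul_den_eq_num (x / N), ← mul_assoc, mul_div_cancel₀ _ hN', Int.cast_natCast]
  | 0, h => exact absurd rfl h

lemma HasXRatio.unique (hN : N ≠ 0) (hp : HasXRatio Q p) (hq : HasXRatio Q q) : p = q := by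
  obtain ⟨x, y, hxy, rfl, e⟩ := hp.exists_eq_some
  obtain ⟨x', y', hxy', heq, e'⟩ := hq.exists_eq_some
  obtain ⟨rfl, rfl⟩ := (Point.some.injEq ..).mp heq
  have cross : p.1 * q.2 = q.1 * p.2 := by
    have : (p.1 * q.2 : ℚ) = q.1 * p.2 := by
      refine mul_left_cancel₀ (Nat.cast_ne_zero.2 hN : (N : ℚ) ≠ 0) ?_
      linear_combination p.2 * e' - q.2 * e
    exact_mod_cast this
  have hsnd : p.2 = q.2 := Int.dvd_antisymm hp.pos.le hq.pos.le
    (hp.isCoprime.symm.dvd_of_dvd_mul_left ⟨q.1, by rw [cross, mul_comm]⟩)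
    (hq.isCoprime.symm.dvd_of_dvd_mul_left ⟨p.1, by rw [← cross, mul_comm]⟩)
  exact Prod.ext (mul_right_cancel₀ hq.pos.ne' (hsnd ▸ cross)) hsnd

lemma HasXRatio.eq_or_eq_neg (h₁ : HasXRatio Q₁ p) (h₂ : HasXRatio Q₂ p) :
    Q₁ = Q₂ ∨ Q₁ = -Q₂ := by
  obtain ⟨x, y, hxy, rfl, e₁⟩ := h₁.exists_eq_some
  obtain ⟨x', y', hxy', rfl, e₂⟩ := h₂.exists_eq_some
  exact Point.X_eq_iff.1 (mul_right_cancel₀ (Int.cast_ne_zero.2 h₁.pos.ne') (e₁.trans e₂.symm))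

lemma HasXRatio.snd_dvd_of_isIntegralPoint (h : HasXRatio Q p) (hQ : IsIntegralPoint Q) :
    p.2 ∣ N := by
  obtain ⟨x, y, hxy, rfl, e⟩ := h.exists_eq_some
  obtain ⟨x', y', hxy', heq, hden⟩ := hQ
  obtain ⟨rfl, rfl⟩ := (Point.some.injEq ..).mp heq
  rw [← Rat.coe_int_num_of_den_eq_one hden] at e
  have e' : x.num * p.2 = N * p.1 := mod_cast e
  exact h.isCoprime.symm.dvd_of_dvd_mul_right ⟨x.num, by rw [← e', mul_comm]⟩

end XRatio

section Doubling

open WeierstrassCurve.Affine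

/-- The pairs `p` and `q` become proportional after duplication. Reading them as ratios `x / N`,
this happens for points which differ by a `2`-torsion point. -/
def DupEquiv (p q : ℤ × ℤ) : Prop :=
  (dup p).1 * (dup q).2 = (dup p).2 * (dup q).1

variable {N : ℕ} {Q : (congruentCurve N).Point} {a b u v : ℤ} {p q : ℤ × ℤ}

lemma dup_fst_pos (h : IsCoprime p.1 p.2) : 0 < (dup p).1 :=
  sq_pos_of_ne_zero h.sq_add_sq_ne_zero

lemma dupEquiv_neg_swap (u v : ℤ) : DupEquiv (v, -u) (u, v) := by
  simp only [DupEquiv, dup]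
  ring

lemma dupEquiv_of_two_mul_eq {σ : ℤ} (hσ : IsUnit σ) (hu : a - σ * b = 2 * v)
    (hv : b + σ * v = u) : DupEquiv (u, v) (a, b) := by
  obtain rfl : a = σ * b + 2 * v := by linear_combination hu
  subst hv
  rcases Int.isUnit_iff.1 hσ with rfl | rfl <;> simp only [DupEquiv, dup] <;> ring

lemma exists_isUnit_four_dvd_sub_mul (ha : Odd a) (hb : Odd b) :
    ∃ σ : ℤ, IsUnit σ ∧ 4 ∣ a - σ * b := by
  obtain ⟨c, rfl⟩ := ha
  obtain ⟨d, rfl⟩ := hb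
  rcases Int.even_or_odd' (c - d) with ⟨e, he | he⟩
  · exact ⟨1, isUnit_one, by omega⟩
  · exact ⟨-1, isUnit_one.neg, by omega⟩

lemma exists_forall_dupEquiv (a₀ : ℤ) (hb : Odd b) :
    ∃ ρ : ℤ, ∀ a, IsCoprime a b → 4 ∣ a - a₀ →
      ∃ z, IsCoprime (b + 2 * ρ * z) (2 * z) ∧ DupEquiv (b + 2 * ρ * z, 2 * z) (a, b) := by
  rcases Int.even_or_odd a₀ with ha₀ | ha₀
  · refine ⟨0, fun a hab h => ?_⟩
    obtain ⟨z, rfl⟩ : Even a := by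
      simpa using (even_iff_two_dvd.2 ((by decide : (2 : ℤ) ∣ 4).trans h)).add ha₀
    have hz : 2 * -z = -(z + z) := by ring
    simp only [mul_zero, zero_mul, add_zero]
    exact ⟨-z, hz ▸ hab.symm.neg_right, hz ▸ dupEquiv_neg_swap _ _⟩
  · obtain ⟨σ, hσ, hσ₀⟩ := exists_isUnit_four_dvd_sub_mul ha₀ hb
    refine ⟨σ, fun a hab h => ?_⟩
    obtain ⟨z, hz⟩ : 4 ∣ a - σ * b := by simpa using h.add hσ₀
    refine ⟨z, ?_, dupEquiv_of_two_mul_eq hσ (by rw [hz]; ring) (by ring)⟩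
    obtain rfl : a = σ * b + 4 * z := by linear_combination hz
    obtain ⟨s, t, hst⟩ := hab
    rcases Int.isUnit_iff.1 hσ with rfl | rfl
    · exact ⟨s + t, s - t, by linear_combination hst⟩
    · exact ⟨t - s, s + t, by linear_combination hst⟩

lemma odd_of_isCoprime_even (hab : IsCoprime a b) (hb : Even b) : Odd a :=
  Int.isCoprime_two_right.1 (hab.of_isCoprime_of_dvd_right hb.two_dvd)

lemma exists_dupEquiv (hab : IsCoprime a b) :
    ∃ u v, IsCoprime u v ∧ Odd u ∧ Even v ∧ DupEquiv (u, v) (a, b) := by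
  rcases Int.even_or_odd b with hb | hb
  · exact ⟨a, b, hab, odd_of_isCoprime_even hab hb, hb, mul_comm _ _⟩
  · obtain ⟨ρ, hρ⟩ := exists_forall_dupEquiv a hb
    obtain ⟨z, hcop, he⟩ := hρ a hab (by simp)
    exact ⟨_, _, hcop, hb.add_even ⟨ρ * z, by ring⟩, even_two_mul z, he⟩

lemma isSquare_of_two_nsmul_eq_some {x y : ℚ} {hxy : (congruentCurve N).Nonsingular x y}
    (h : (2 : ℕ) • Q = Point.some x y hxy) : IsSquare x := by
  cases Q with
  | zero => exact absurd (h.symm.trans (nsmul_zero 2)) (Point.some_ne_zero hxy)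
  | some x₀ y₀ h₀ => exact (fst_eq_of_two_nsmul_some_eq h).2 ▸ IsSquare.sq _

lemma HasXRatio.mul_dup_eq (hN : N ≠ 0) (h : HasXRatio Q p) {x y : ℚ}
    {hxy : (congruentCurve N).Nonsingular x y} (hQ : (2 : ℕ) • Q = Point.some x y hxy) :
    x * (dup p).2 = N * (dup p).1 := by
  obtain ⟨a, b⟩ := p
  obtain ⟨x₀, y₀, hxy₀, rfl, e⟩ := h.exists_eq_some
  obtain ⟨hy₀, hx⟩ := fst_eq_of_two_nsmul_some_eq hQ
  have hdouble : x * (4 * y₀ ^ 2) = (x₀ ^ 2 + N ^ 2) ^ 2 := by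
    rw [hx]
    field_simp
    norm_num
  have hnum : (x₀ ^ 2 + N ^ 2) * b ^ 2 = N ^ 2 * (a ^ 2 + b ^ 2) := by
    linear_combination (x₀ * b + N * a) * e
  have hden : (b : ℚ) ^ 4 * y₀ ^ 2 = N ^ 3 * (a * b * (a ^ 2 - b ^ 2)) := by
    rw [sq_eq_of_nonsingular hxy₀]
    linear_combination b * ((x₀ * b) ^ 2 + x₀ * b * (N * a) + (N * a) ^ 2 - N ^ 2 * b ^ 2) * e
  refine mul_left_cancel₀ (pow_ne_zero 3 (Nat.cast_ne_zero.2 hN : (N : ℚ) ≠ 0)) ?_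
  simp only [dup]
  push_cast
  calc (N : ℚ) ^ 3 * (x * (4 * a * b * (a ^ 2 - b ^ 2)))
      = x * (4 * y₀ ^ 2) * b ^ 4 := by linear_combination -4 * x * hden
    _ = ((x₀ ^ 2 + N ^ 2) * b ^ 2) ^ 2 := by rw [hdouble]; ring
    _ = N ^ 3 * (N * (a ^ 2 + b ^ 2) ^ 2) := by rw [hnum]; ring

lemma HasXRatio.two_nsmul (hN : N ≠ 0) (h : HasXRatio Q p) (hQ : (2 : ℕ) • Q ≠ 0)
    (hq : IsCoprime q.1 q.2) (hq₁ : Odd q.1) (hq₂ : Even q.2) (he : DupEquiv q p) :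
    HasXRatio ((2 : ℕ) • Q) (dup q) := by
  match heq : (2 : ℕ) • Q, hQ with
  | Point.some x y hxy, _ =>
    have hx := h.mul_dup_eq hN heq
    have hN' : (0 : ℚ) < N := Nat.cast_pos.2 (Nat.pos_of_ne_zero hN)
    have hp : (0 : ℚ) < (dup p).1 := Int.cast_pos.2 (dup_fst_pos h.isCoprime)
    have hp0 : ((dup p).2 : ℚ) ≠ 0 := right_ne_zero_of_mul (hx ▸ (mul_pos hN' hp).ne')
    have he' : ((dup q).1 * (dup p).2 : ℚ) = (dup q).2 * (dup p).1 := mod_cast he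
    have hx' : x * (dup q).2 = N * (dup q).1 := by
      refine mul_right_cancel₀ hp0 ?_
      linear_combination ((dup q).2 : ℚ) * hx - N * he'
    have hpos : 0 < x * (dup q).2 := hx' ▸ mul_pos hN' (Int.cast_pos.2 (dup_fst_pos hq))
    exact ⟨isCoprime_dup hq hq₁ hq₂,
      Int.cast_pos.1 (pos_of_mul_pos_right hpos (isSquare_of_two_nsmul_eq_some heq).nonneg),
      x, y, hxy, rfl, hx'⟩
  | 0, hQ => exact absurd rfl hQ

lemma HasXRatio.exists_eq_dup (hN : N ≠ 0) (h : HasXRatio ((2 : ℕ) • Q) p) :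
    ∃ q, IsCoprime q.1 q.2 ∧ Odd q.1 ∧ Even q.2 ∧ p = dup q := by
  have hQ : Q ≠ 0 := by
    rintro rfl
    exact h.ne_zero (nsmul_zero 2)
  obtain ⟨r, hr⟩ := exists_hasXRatio hN hQ
  obtain ⟨u, v, hq, hu, hv, he⟩ := exists_dupEquiv hr.isCoprime
  exact ⟨(u, v), hq, hu, hv, h.unique hN (hr.two_nsmul hN h.ne_zero hq hu hv he)⟩

lemma HasXRatio.odd_fst_of_two_nsmul (hN : N ≠ 0) (h : HasXRatio ((2 : ℕ) • Q) p) :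
    Odd p.1 := by
  obtain ⟨q, -, hu, hv, rfl⟩ := h.exists_eq_dup hN
  exact (hu.pow.add_even (hv.pow_of_ne_zero two_ne_zero)).pow

lemma HasXRatio.eight_dvd_snd_of_two_nsmul (hN : N ≠ 0) (h : HasXRatio ((2 : ℕ) • Q) p) :
    8 ∣ p.2 := by
  obtain ⟨⟨u, v⟩, -, -, ⟨w, rfl⟩, rfl⟩ := h.exists_eq_dup hN
  exact ⟨u * w * (u ^ 2 - (w + w) ^ 2), by simp only [dup]; ring⟩

lemma HasXRatio.even_snd_of_two_nsmul (hN : N ≠ 0) (h : HasXRatio ((2 : ℕ) • Q) p) :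
    Even p.2 :=
  even_iff_two_dvd.2 ((by decide : (2 : ℤ) ∣ 8).trans (h.eight_dvd_snd_of_two_nsmul hN))

lemma HasXRatio.two_nsmul_two_nsmul (hN : N ≠ 0) (h : HasXRatio ((2 : ℕ) • Q) p)
    (hQ : (2 : ℕ) • (2 : ℕ) • Q ≠ 0) : HasXRatio ((2 : ℕ) • (2 : ℕ) • Q) (dup p) :=
  h.two_nsmul hN hQ h.isCoprime (h.odd_fst_of_two_nsmul hN) (h.even_snd_of_two_nsmul hN)
    (mul_comm _ _)

lemma natCast_dvd_of_isSquare (hN : Squarefree N) {x : ℚ} (hx : IsSquare x) {s : ℤ} (hs : s ≠ 0)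
    (h : x * b = N * s ^ 2) : (N : ℤ) ∣ b := by
  have hN' : (N : ℚ) ≠ 0 := Nat.cast_ne_zero.2 hN.ne_zero
  have hx0 : x ≠ 0 :=
    left_ne_zero_of_mul (h ▸ mul_ne_zero hN' (pow_ne_zero 2 (Int.cast_ne_zero.2 hs)))
  have hNb : IsSquare (((N * b : ℤ)) : ℚ) := by
    obtain ⟨r, rfl⟩ := hx
    have hr : r ≠ 0 := left_ne_zero_of_mul hx0
    refine ⟨N * s / r, ?_⟩
    push_cast
    field_simp
    linear_combination h
  obtain ⟨m, hm⟩ := Rat.isSquare_intCast_iff.1 hNb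
  have hdvd : (N : ℤ) ∣ m :=
    ((Int.squarefree_natCast.2 hN).dvd_pow_iff_dvd two_ne_zero).1 ⟨b, by rw [hm, sq]⟩
  obtain ⟨k, rfl⟩ := hdvd
  exact ⟨k * k, mul_left_cancel₀ (Nat.cast_ne_zero.2 hN.ne_zero) (by rw [hm]; ring)⟩

lemma HasXRatio.natCast_dvd_snd_of_two_nsmul (hN : Squarefree N)
    (h : HasXRatio ((2 : ℕ) • Q) p) : (N : ℤ) ∣ p.2 := by
  obtain ⟨x, y, hxy, heq, hx⟩ := h.exists_eq_some
  obtain ⟨q, hq, -, -, rfl⟩ := h.exists_eq_dup hN.ne_zero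
  exact natCast_dvd_of_isSquare hN (isSquare_of_two_nsmul_eq_some heq) hq.sq_add_sq_ne_zero
    (by rw [hx, dup, Int.cast_pow])

end Doubling

section Parallelogram

open WeierstrassCurve.Affine

variable {N : ℕ} {Q₁ Q₂ : (congruentCurve N).Point} {a b c d a' b' c' d' : ℤ}

lemma HasXRatio.add_sub_proportional (hN : N ≠ 0) (h₁ : HasXRatio Q₁ (a, b))
    (h₂ : HasXRatio Q₂ (c, d)) (h : HasXRatio (Q₁ + Q₂) (a', b'))
    (h' : HasXRatio (Q₁ - Q₂) (c', d')) :
    a * d - b * c ≠ 0 ∧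
      a' * c' * (a * d - b * c) ^ 2 = (a * c + b * d) ^ 2 * (b' * d') ∧
      (a' * d' + b' * c') * (a * d - b * c) ^ 2 =
        2 * (a * d + b * c) * (a * c - b * d) * (b' * d') := by
  have hN' : (N : ℚ) ≠ 0 := Nat.cast_ne_zero.2 hN
  have hbd : (b * d : ℚ) ≠ 0 := mod_cast mul_ne_zero h₁.pos.ne' h₂.pos.ne'
  obtain ⟨x₁, y₁, hxy₁, rfl, e₁⟩ := h₁.exists_eq_some
  obtain ⟨x₂, y₂, hxy₂, rfl, e₂⟩ := h₂.exists_eq_some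
  have hx := fst_ne_of_add_ne_zero_of_sub_ne_zero h.ne_zero h'.ne_zero
  obtain ⟨x, y, hxy, x', y', hxy', hadd, hsub, hprod, hsum⟩ := exists_add_sub_some_eq hxy₁ hxy₂ hx
  obtain ⟨_, _, _, heq, e⟩ := h.exists_eq_some
  obtain ⟨rfl, rfl⟩ := (Point.some.injEq ..).mp (hadd.symm.trans heq)
  obtain ⟨_, _, _, heq', e'⟩ := h'.exists_eq_some
  obtain ⟨rfl, rfl⟩ := (Point.some.injEq ..).mp (hsub.symm.trans heq')
  have hdiff : (x₁ - x₂) * (b * d) = N * (a * d - b * c) := by linear_combination d * e₁ - b * e₂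
  have hplus : (x₁ + x₂) * (b * d) = N * (a * d + b * c) := by linear_combination d * e₁ + b * e₂
  have hmul : x₁ * x₂ * (b * d) = N ^ 2 * (a * c) := by linear_combination x₂ * d * e₁ + N * a * e₂
  have hmul' : x * x' * (b' * d') = N ^ 2 * (a' * c') := by
    linear_combination x' * d' * e + N * a' * e'
  have hplus' : (x + x') * (b' * d') = N * (a' * d' + b' * c') := by
    linear_combination d' * e + b' * e'
  refine ⟨fun h0 => ?_, ?_, ?_⟩
  · have h0' : (a * d - b * c : ℚ) = 0 := mod_cast h0
    exact mul_ne_zero (sub_ne_zero.2 hx) hbd (by rw [hdiff, h0', mul_zero])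
  · have key := calc
      (N : ℚ) ^ 4 * (a' * c' * (a * d - b * c) ^ 2)
        = N ^ 2 * (a' * c') * (N * (a * d - b * c)) ^ 2 := by ring
      _ = x * x' * (x₁ - x₂) ^ 2 * (b * d) ^ 2 * (b' * d') := by rw [← hmul', ← hdiff]; ring
      _ = (x₁ * x₂ * (b * d) + N ^ 2 * (b * d)) ^ 2 * (b' * d') := by rw [hprod]; ring
      _ = N ^ 4 * (((a : ℚ) * c + b * d) ^ 2 * (b' * d')) := by rw [hmul]; ring
    exact_mod_cast mul_left_cancel₀ (pow_ne_zero 4 hN') key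
  · have key := calc
      (N : ℚ) ^ 3 * ((a' * d' + b' * c') * (a * d - b * c) ^ 2)
        = N * (a' * d' + b' * c') * (N * (a * d - b * c)) ^ 2 := by ring
      _ = (x + x') * (x₁ - x₂) ^ 2 * (b * d) ^ 2 * (b' * d') := by rw [← hplus', ← hdiff]; ring
      _ = 2 * ((x₁ + x₂) * (b * d)) * (x₁ * x₂ * (b * d) - N ^ 2 * (b * d)) * (b' * d') := by
        rw [hsum]; ring
      _ = N ^ 3 * (2 * ((a : ℚ) * d + b * c) * (a * c - b * d) * (b' * d')) := by
        rw [hplus, hmul]; ring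
    exact_mod_cast mul_left_cancel₀ (pow_ne_zero 3 hN') key

lemma HasXRatio.add_sub_eq (hN : N ≠ 0) (h₁ : HasXRatio Q₁ (a, b)) (h₂ : HasXRatio Q₂ (c, d))
    (h : HasXRatio (Q₁ + Q₂) (a', b')) (h' : HasXRatio (Q₁ - Q₂) (c', d'))
    (hodd : Odd (a * c + b * d)) :
    a' * c' = (a * c + b * d) ^ 2 ∧
      a' * d' + b' * c' = 2 * (a * d + b * c) * (a * c - b * d) := by
  obtain ⟨hne, hprod, hsum⟩ := h₁.add_sub_proportional hN h₂ h h'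
  have key := eq_of_proportional (k := 2)
    (v := ![a' * c', a' * d' + b' * c', b' * d'])
    (f := ![(a * c + b * d) ^ 2, 2 * (a * d + b * c) * (a * c - b * d), (a * d - b * c) ^ 2])
    (mul_pos h.pos h'.pos) (sq_pos_of_ne_zero hne)
    (fun p hp => isUnit_of_dvd_mul_of_dvd_add_of_dvd_mul h.isCoprime h'.isCoprime
      (hp 0) (hp 1) (hp 2))
    (fun p hp => isUnit_of_dvd_sum_of_dvd_diff h₁.isCoprime h₂.isCoprime hodd
      (hp 0) (hp 1) (hp 2))
    (fun i => by fin_cases i; exacts [hprod, hsum, mul_comm _ _])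
  exact ⟨congrFun key 0, congrFun key 1⟩

end Parallelogram

section Multiples

variable {N : ℕ} {P Q : (congruentCurve N).Point} {M : ℤ}

lemma scalesBy_zero (M : ℤ) (p : ℤ × ℤ) : ScalesBy M 0 p (1, 0) :=
  ⟨dvd_zero M, by simp, by simp⟩

lemma scalesBy_one {p : ℤ × ℤ} (h : M ∣ p.2) : ScalesBy M 1 p p :=
  ⟨h, by simp, by simp [mul_comm]⟩

variable {n : ℕ} {p₀ p p' p'' : ℤ × ℤ}

lemma ScalesBy.dvd_fst_sub_pow_of_add (hM : M ∣ p₀.2) (hM₀ : IsCoprime M p₀.1)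
    (h : ScalesBy M ((n + 1) ^ 2) p₀ p) (h' : ScalesBy M (n ^ 2) p₀ p')
    (hprod : p''.1 * p'.1 = (p.1 * p₀.1 + p.2 * p₀.2) ^ 2) :
    M ^ 2 ∣ p''.1 - p₀.1 ^ (n + 2) ^ 2 := by
  have hsq : M ^ 2 ∣ p.2 * p₀.2 := sq M ▸ mul_dvd_mul h.dvd_snd hM
  have hfactor : p₀.1 ^ n ^ 2 * (p''.1 - p₀.1 ^ (n + 2) ^ 2) =
      ((p.1 - p₀.1 ^ (n + 1) ^ 2) * p₀.1 + p.2 * p₀.2) *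
        (p.1 * p₀.1 + p.2 * p₀.2 + p₀.1 ^ (n + 1) ^ 2 * p₀.1) -
      p''.1 * (p'.1 - p₀.1 ^ n ^ 2) := by
    linear_combination hprod
  refine (hM₀.pow (m := 2) (n := n ^ 2)).dvd_of_dvd_mul_left ?_
  rw [hfactor]
  exact (((h.dvd_fst_sub_pow.mul_right _).add hsq).mul_right _).sub (h'.dvd_fst_sub_pow.mul_left _)

lemma ScalesBy.add (hM : M ∣ p₀.2) (hM₀ : IsCoprime M p₀.1) (hM' : IsCoprime M p'.1)
    (h : ScalesBy M ((n + 1) ^ 2) p₀ p) (h' : ScalesBy M (n ^ 2) p₀ p')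
    (hprod : p''.1 * p'.1 = (p.1 * p₀.1 + p.2 * p₀.2) ^ 2)
    (hsum : p''.1 * p'.2 + p''.2 * p'.1 =
      2 * (p.1 * p₀.2 + p.2 * p₀.1) * (p.1 * p₀.1 - p.2 * p₀.2)) :
    ScalesBy M ((n + 2) ^ 2) p₀ p'' := by
  refine ⟨hM'.dvd_of_dvd_mul_left ?_, h.dvd_fst_sub_pow_of_add hM hM₀ h' hprod,
    hM'.pow_left.dvd_of_dvd_mul_left ?_⟩
  · have hsplit : p'.1 * p''.2 =
        2 * (p.1 * p₀.2 + p.2 * p₀.1) * (p.1 * p₀.1 - p.2 * p₀.2) - p''.1 * p'.2 := by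
      linear_combination hsum
    rw [hsplit]
    exact ((((hM.mul_left _).add (h.dvd_snd.mul_right _)).mul_left _).mul_right _).sub
      (h'.dvd_snd.mul_left _)
  · have hcube : M ^ 3 ∣ (p.1 * p₀.2 + p.2 * p₀.1) * (p.2 * p₀.2) := by
      rw [pow_succ', sq]
      exact mul_dvd_mul ((hM.mul_left _).add (h.dvd_snd.mul_right _)) (mul_dvd_mul h.dvd_snd hM)
    have hcube' : M ^ 3 ∣ p₀.2 * (p.2 * p₀.2) := by
      rw [pow_succ', sq]
      exact mul_dvd_mul hM (mul_dvd_mul h.dvd_snd hM)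
    have hsplit : p'.1 * (p''.2 * p₀.1 - ((n + 2) ^ 2 : ℕ) * p₀.2 * p''.1) =
        2 * p.1 * p₀.1 ^ 2 * (p.2 * p₀.1 - ((n + 1) ^ 2 : ℕ) * p₀.2 * p.1) -
          p''.1 * (p'.2 * p₀.1 - (n ^ 2 : ℕ) * p₀.2 * p'.1) -
          2 * p₀.1 * ((p.1 * p₀.2 + p.2 * p₀.1) * (p.2 * p₀.2)) -
          ((n + 2) ^ 2 + n ^ 2) * (2 * p.1 * p₀.1 + p.2 * p₀.2) * (p₀.2 * (p.2 * p₀.2)) := by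
      push_cast
      linear_combination p₀.1 * hsum - ((n + 2) ^ 2 + n ^ 2) * p₀.2 * hprod
    rw [hsplit]
    exact (((h.dvd_cross_sub.mul_left _).sub (h'.dvd_cross_sub.mul_left _)).sub
      (hcube.mul_left _)).sub (hcube'.mul_left _)

lemma nsmul_ne_zero_of_not_isOfFinAddOrder {A : Type*} [AddMonoid A] {a : A}
    (ha : ¬IsOfFinAddOrder a) (hn : n ≠ 0) : n • a ≠ 0 :=
  addOrderOf_eq_zero_iff'.1 (addOrderOf_eq_zero ha) n hn.bot_lt

lemma HasXRatio.scalesBy (hN : N ≠ 0) (hQ : ¬IsOfFinAddOrder Q)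
    (h₀ : HasXRatio ((2 : ℕ) • Q) p₀) (hM : M ∣ p₀.2) (n : ℕ)
    (h : HasXRatio (n • (2 : ℕ) • Q) p) : ScalesBy M (n ^ 2) p₀ p := by
  have hM₀ : IsCoprime M p₀.1 := h₀.isCoprime.symm.of_isCoprime_of_dvd_left hM
  induction n using Nat.twoStepInduction generalizing p with
  | zero => exact absurd (zero_nsmul _) h.ne_zero
  | one =>
    obtain rfl := h₀.unique hN (one_nsmul ((2 : ℕ) • Q) ▸ h)
    simpa using scalesBy_one hM
  | more n ih ih' =>
    rcases eq_or_ne n 0 with rfl | hn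
    · obtain rfl := h.unique hN (h₀.two_nsmul_two_nsmul hN h.ne_zero)
      refine ScalesBy.add (p' := (1, 0)) hM hM₀ isCoprime_one_right
        (by simpa using scalesBy_one hM) (scalesBy_zero M p₀) ?_ ?_ <;> simp only [dup] <;> ring
    · have hne {m : ℕ} (hm : m ≠ 0) : m • (2 : ℕ) • Q ≠ 0 :=
        nsmul_ne_zero_of_not_isOfFinAddOrder (fun h => hQ (h.of_nsmul two_ne_zero)) hm
      obtain ⟨p₁, h₁⟩ := exists_hasXRatio hN (hne n.succ_ne_zero)
      obtain ⟨p', h'⟩ := exists_hasXRatio hN (hne hn)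
      have hadd : (n + 1) • (2 : ℕ) • Q + (2 : ℕ) • Q = (n + 2) • (2 : ℕ) • Q :=
        (succ_nsmul _ (n + 1)).symm
      have hsub : (n + 1) • (2 : ℕ) • Q - (2 : ℕ) • Q = n • (2 : ℕ) • Q := by
        rw [succ_nsmul, add_sub_cancel_right]
      have hodd : Odd (p₁.1 * p₀.1 + p₁.2 * p₀.2) := by
        rw [nsmul_left_comm] at h₁
        exact ((h₁.odd_fst_of_two_nsmul hN).mul (h₀.odd_fst_of_two_nsmul hN)).add_even
          ((h₀.even_snd_of_two_nsmul hN).mul_left _)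
      obtain ⟨hprod, hsum⟩ := h₁.add_sub_eq hN h₀ (hadd ▸ h) (hsub ▸ h') hodd
      have hs' := ih h'
      exact (ih' h₁).add hM hM₀ (h'.isCoprime.symm.of_isCoprime_of_dvd_left hs'.dvd_snd) hs' hprod
        (by rw [hsum])

lemma HasXRatio.iterate_dup (hN : N ≠ 0) (hQ : ¬IsOfFinAddOrder Q) {p : ℤ × ℤ}
    (h : HasXRatio ((2 : ℕ) • Q) (dup p)) (i : ℕ) :
    HasXRatio ((2 : ℕ) • 2 ^ i • Q) (dup^[i + 1] p) := by
  induction i with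
  | zero => simpa using h
  | succ i ih =>
    have heq : 2 ^ (i + 1) • Q = (2 : ℕ) • 2 ^ i • Q := by rw [pow_succ', mul_nsmul']
    rw [heq, Function.iterate_succ_apply' _ (i + 1)]
    refine ih.two_nsmul_two_nsmul hN ?_
    rw [← heq, ← mul_nsmul']
    exact nsmul_ne_zero_of_not_isOfFinAddOrder hQ (by positivity)

lemma HasXRatio.iterScalesBy (hN : N ≠ 0) (hP : ¬IsOfFinAddOrder P) {u w u' w' : ℤ}
    (hu : Odd u) (h : HasXRatio ((2 : ℕ) • P) (dup (u, 2 * w)))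
    (h' : HasXRatio ((2 : ℕ) • n • P) (dup (u', 2 * w'))) :
    IterScalesBy (n ^ 2) (u, 2 * w) (u', 2 * w') := by
  intro i
  have hn : n ≠ 0 := by
    rintro rfl
    exact h'.ne_zero (by simp)
  have hdvd : (2 : ℤ) ^ (2 * i + 3) ∣ (dup^[i + 1] (u, 2 * w)).2 := by
    obtain ⟨k, rfl⟩ := hu
    obtain ⟨r, q, heq⟩ := exists_iterate_dup_eq (u := 2 * k + 1) (w := w) (e := k ^ 2 + k + w ^ 2)
      (by ring) i
    exact heq ▸ dvd_mul_right _ _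
  refine (h.iterate_dup hN hP i).scalesBy hN (fun h => hP (h.of_nsmul (by positivity))) hdvd n ?_
  have h'' := h'.iterate_dup hN (fun h => hP (h.of_nsmul hn)) i
  rwa [nsmul_left_comm _ 2 n, nsmul_left_comm _ (2 ^ i) n]

end Multiples

section Integral

variable {N : ℕ} {P : (congruentCurve N).Point} {n : ℕ} {α₀ β : ℤ}

lemma IsIntegralPoint.ne_zero (h : IsIntegralPoint P) : P ≠ 0 := by
  obtain ⟨x, y, hxy, rfl, -⟩ := h
  exact WeierstrassCurve.Affine.Point.some_ne_zero hxy

lemma not_four_dvd_natCast_of_squarefree (hN : Squarefree N) : ¬(4 : ℤ) ∣ N := by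
  intro h
  simpa [Int.isUnit_iff] using Int.squarefree_natCast.2 hN 2 h

lemma odd_of_not_four_dvd_two_mul {b : ℤ} (h : ¬4 ∣ 2 * b) : Odd b := by
  by_contra hb
  obtain ⟨c, rfl⟩ := even_iff_two_dvd.1 (Int.not_odd_iff_even.1 hb)
  exact h ⟨c, by ring⟩

lemma four_dvd_of_eight_dvd_mul {x : ℤ} (hβ : ¬4 ∣ β) (h : 8 ∣ β * x) : 4 ∣ x := by
  rcases Int.even_or_odd β with hev | hodd
  · obtain ⟨b, rfl⟩ := even_iff_two_dvd.1 hev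
    have hb : IsCoprime (2 ^ 2) b :=
      (Int.isCoprime_two_left.2 (odd_of_not_four_dvd_two_mul hβ)).pow_left
    rw [mul_assoc] at h
    exact hb.dvd_of_dvd_mul_left (by lia)
  · exact (by decide : (4 : ℤ) ∣ 8).trans
      ((Int.isCoprime_two_left.2 hodd).pow_left (m := 3).dvd_of_dvd_mul_left h)

lemma not_isIntegralPoint_two_nsmul (hN : Squarefree N) (P : (congruentCurve N).Point) :
    ¬IsIntegralPoint ((2 : ℕ) • P) := by
  intro hP
  obtain ⟨p, hp⟩ := exists_hasXRatio hN.ne_zero hP.ne_zero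
  exact not_four_dvd_natCast_of_squarefree hN (((by decide : (4 : ℤ) ∣ 8).trans
    (hp.eight_dvd_snd_of_two_nsmul hN.ne_zero)).trans (hp.snd_dvd_of_isIntegralPoint hP))

lemma odd_of_isIntegralPoint_nsmul (hN : Squarefree N) (h : IsIntegralPoint (n • P)) :
    Odd n := by
  by_contra hodd
  obtain ⟨k, rfl⟩ := even_iff_two_dvd.1 (Nat.not_odd_iff_even.1 hodd)
  exact not_isIntegralPoint_two_nsmul hN (k • P) (mul_nsmul' P 2 k ▸ h)

lemma HasXRatio.nsmul_inj (hP : ¬IsOfFinAddOrder P) {m : ℕ} {p : ℤ × ℤ}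
    (hm : HasXRatio (m • P) p) (hn : HasXRatio (n • P) p) : m = n := by
  rcases hm.eq_or_eq_neg hn with h | h
  · exact injective_nsmul_iff_not_isOfFinAddOrder.2 hP h
  · have hsum : m + n = 0 := by
      by_contra hne
      exact nsmul_ne_zero_of_not_isOfFinAddOrder hP hne (by rw [add_nsmul, h, neg_add_cancel])
    omega

lemma HasXRatio.dvd_cross_sub_of_add_sub {Q₁ Q₂ : (congruentCurve N).Point} {a b c d z : ℤ}
    {p p' : ℤ × ℤ} (hN : N ≠ 0) (h₁ : HasXRatio Q₁ (a, b)) (h₂ : HasXRatio Q₂ (c, d))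
    (h : HasXRatio (Q₁ + Q₂) p) (h' : HasXRatio (Q₁ - Q₂) p') (hz : z ∣ p.2) (hz' : z ∣ p'.2) :
    z ∣ a * d - b * c := by
  obtain ⟨-, hprod, -⟩ := h₁.add_sub_proportional hN h₂ h h'
  have hcop : IsCoprime (z ^ 2) (p.1 * p'.1) :=
    ((h.isCoprime.symm.of_isCoprime_of_dvd_left hz).mul_right
      (h'.isCoprime.symm.of_isCoprime_of_dvd_left hz')).pow_left
  have hsq : z ^ 2 ∣ p.1 * p'.1 * (a * d - b * c) ^ 2 := by
    rw [hprod, sq z]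
    exact (mul_dvd_mul hz hz').mul_left _
  exact (Int.pow_dvd_pow_iff two_ne_zero).1 (hcop.dvd_of_dvd_mul_left hsq)

lemma dvd_cross_sub_of_odd_nsmul (hN : Squarefree N) (hP : ¬IsOfFinAddOrder P) {k : ℕ} {α β' : ℤ}
    (hk : k ≠ 0) (h₀ : HasXRatio P (α₀, β)) (h : HasXRatio ((2 * k + 1) • P) (α, β')) :
    8 ∣ α * β - β' * α₀ ∧ (N : ℤ) ∣ α * β - β' * α₀ := by
  have hne {m : ℕ} (hm : m ≠ 0) : (2 : ℕ) • m • P ≠ 0 :=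
    mul_nsmul' P 2 m ▸ nsmul_ne_zero_of_not_isOfFinAddOrder hP (mul_ne_zero two_ne_zero hm)
  obtain ⟨p, hp⟩ := exists_hasXRatio hN.ne_zero (hne k.succ_ne_zero)
  obtain ⟨p', hp'⟩ := exists_hasXRatio hN.ne_zero (hne hk)
  have hadd : (2 * k + 1) • P + P = (2 : ℕ) • (k + 1) • P := by
    rw [← succ_nsmul, ← mul_nsmul', mul_add_one]
  have hsub : (2 * k + 1) • P - P = (2 : ℕ) • k • P := by
    rw [succ_nsmul, add_sub_cancel_right, mul_nsmul']
  have hdvd {z : ℤ} := h.dvd_cross_sub_of_add_sub (z := z) hN.ne_zero h₀ (hadd ▸ hp) (hsub ▸ hp')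
  exact ⟨hdvd (hp.eight_dvd_snd_of_two_nsmul hN.ne_zero)
      (hp'.eight_dvd_snd_of_two_nsmul hN.ne_zero),
    hdvd (hp.natCast_dvd_snd_of_two_nsmul hN) (hp'.natCast_dvd_snd_of_two_nsmul hN)⟩

lemma exists_hasXRatio_nsmul_of_isIntegralPoint (hN : Squarefree N) (hP : ¬IsOfFinAddOrder P)
    (hPint : IsIntegralPoint P) (h₀ : HasXRatio P (α₀, β)) (hn : IsIntegralPoint (n • P)) :
    ∃ α, HasXRatio (n • P) (α, β) ∧ 4 ∣ α - α₀ := by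
  obtain ⟨k, rfl⟩ := odd_of_isIntegralPoint_nsmul hN hn
  rcases eq_or_ne k 0 with rfl | hk
  · exact ⟨α₀, by simpa using h₀, by simp⟩
  obtain ⟨⟨α, β'⟩, h⟩ := exists_hasXRatio hN.ne_zero hn.ne_zero
  obtain ⟨h8, hNdvd⟩ := dvd_cross_sub_of_odd_nsmul hN hP hk h₀ h
  obtain rfl : β' = β := by
    refine Int.dvd_antisymm h.pos.le h₀.pos.le ?_ ?_
    · exact h.isCoprime.symm.dvd_of_dvd_mul_left ((dvd_sub_left (dvd_mul_right _ _)).1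
        ((h.snd_dvd_of_isIntegralPoint hn).trans hNdvd))
    · exact h₀.isCoprime.symm.dvd_of_dvd_mul_right ((dvd_sub_right (dvd_mul_left _ _)).1
        ((h₀.snd_dvd_of_isIntegralPoint hPint).trans hNdvd))
  refine ⟨α, h, four_dvd_of_eight_dvd_mul (β := β') (fun h4 => ?_) ?_⟩
  · exact not_four_dvd_natCast_of_squarefree hN (h4.trans (h₀.snd_dvd_of_isIntegralPoint hPint))
  · rwa [mul_sub, mul_comm β' α]

lemma eq_one_of_isIntegralPoint_nsmul_of_even (hN : Squarefree N) (hP : ¬IsOfFinAddOrder P)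
    (hPint : IsIntegralPoint P) (h₀ : HasXRatio P (α₀, β)) (hβ : Even β)
    (hn : IsIntegralPoint (n • P)) : n = 1 := by
  obtain ⟨α, h, z, hz⟩ := exists_hasXRatio_nsmul_of_isIntegralPoint hN hP hPint h₀ hn
  obtain ⟨b, rfl⟩ := even_iff_two_dvd.1 hβ
  have hα₀ : Odd α₀ := odd_of_isCoprime_even h₀.isCoprime hβ
  have hb : Odd b := odd_of_not_four_dvd_two_mul fun h4 =>
    not_four_dvd_natCast_of_squarefree hN (h4.trans (h₀.snd_dvd_of_isIntegralPoint hPint))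
  obtain rfl : α = α₀ + 4 * z := by linear_combination hz
  have hdup {Q : (congruentCurve N).Point} {a : ℤ} (hQ : HasXRatio Q (a, 2 * b))
      (hQ' : ¬IsOfFinAddOrder Q) : HasXRatio ((2 : ℕ) • Q) (dup (a, 2 * b)) :=
    hQ.two_nsmul hN.ne_zero (nsmul_ne_zero_of_not_isOfFinAddOrder hQ' two_ne_zero) hQ.isCoprime
      (odd_of_isCoprime_even hQ.isCoprime hβ) hβ (mul_comm _ _)
  have hn0 : n ≠ 0 := (odd_of_isIntegralPoint_nsmul hN hn).pos.ne'
  obtain rfl : z = 0 := eq_of_iterScalesBy_of_even hα₀ hb (z₀ := 0) (m := n ^ 2) <| by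
    simpa using (hdup h₀ hP).iterScalesBy hN.ne_zero hP hα₀ (hdup h fun h => hP (h.of_nsmul hn0))
  exact h.nsmul_inj hP (by simpa using h₀)

lemma exists_forall_hasXRatio_dup_of_odd (hN : Squarefree N) (hP : ¬IsOfFinAddOrder P)
    (hPint : IsIntegralPoint P) (h₀ : HasXRatio P (α₀, β)) (hβ : Odd β) :
    ∃ ρ : ℤ, ∀ n : ℕ, IsIntegralPoint (n • P) →
      ∃ z, HasXRatio ((2 : ℕ) • n • P) (dup (β + 2 * ρ * z, 2 * z)) := by
  obtain ⟨ρ, hρ⟩ := exists_forall_dupEquiv α₀ hβ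
  refine ⟨ρ, fun n hn => ?_⟩
  obtain ⟨α, h, h4⟩ := exists_hasXRatio_nsmul_of_isIntegralPoint hN hP hPint h₀ hn
  obtain ⟨z, hz, he⟩ := hρ α h.isCoprime h4
  have hn0 : n ≠ 0 := (odd_of_isIntegralPoint_nsmul hN hn).pos.ne'
  have hne : (2 : ℕ) • n • P ≠ 0 :=
    mul_nsmul' P 2 n ▸ nsmul_ne_zero_of_not_isOfFinAddOrder hP (mul_ne_zero two_ne_zero hn0)
  exact ⟨z, h.two_nsmul hN.ne_zero hne hz (hβ.add_even ⟨ρ * z, by ring⟩) (even_two_mul z) he⟩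

lemma eq_of_isIntegralPoint_nsmul_of_odd (hN : Squarefree N) (hP : ¬IsOfFinAddOrder P)
    (hPint : IsIntegralPoint P) (h₀ : HasXRatio P (α₀, β)) (hβ : Odd β) {n₁ n₂ : ℕ}
    (hn₁ : n₁ ≠ 1) (hn₂ : n₂ ≠ 1) (h₁ : IsIntegralPoint (n₁ • P))
    (h₂ : IsIntegralPoint (n₂ • P)) : n₁ = n₂ := by
  obtain ⟨ρ, hρ⟩ := exists_forall_hasXRatio_dup_of_odd hN hP hPint h₀ hβ
  obtain ⟨z₀, hz₀⟩ := hρ 1 (by simpa using hPint)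
  obtain ⟨z₁, hz₁⟩ := hρ n₁ h₁
  obtain ⟨z₂, hz₂⟩ := hρ n₂ h₂
  have hinj {m n : ℕ} {p : ℤ × ℤ} (hm : HasXRatio ((2 : ℕ) • m • P) p)
      (hn : HasXRatio ((2 : ℕ) • n • P) p) : m = n :=
    Nat.eq_of_mul_eq_mul_left two_pos <|
      HasXRatio.nsmul_inj hP (mul_nsmul' P 2 m ▸ hm) (mul_nsmul' P 2 n ▸ hn)
  have hscale {n : ℕ} {z : ℤ} (hz : HasXRatio ((2 : ℕ) • n • P) (dup (β + 2 * ρ * z, 2 * z))) :=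
    HasXRatio.iterScalesBy hN.ne_zero hP (hβ.add_even ⟨ρ * z₀, by ring⟩)
      (one_nsmul P ▸ hz₀) hz
  have hz₀_ne : z₀ ≠ 0 := by
    rintro rfl
    simpa [dup] using hz₀.pos
  have hzero := eq_zero_of_iterScalesBy_of_odd hβ (hscale hz₁) (hscale hz₂)
  simp only [mul_eq_zero, hz₀_ne, false_or, sub_eq_zero] at hzero
  obtain (rfl | rfl) | rfl := hzero
  · exact absurd (hinj hz₁ hz₀) hn₁
  · exact absurd (hinj hz₂ hz₀) hn₂
  · exact hinj hz₁ hz₂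

end Integral

theorem stmt0 (N : ℕ) (hN : 0 < N) (hsq : Squarefree N)
    (P : (congruentCurve N).Point)
    (hPint : IsIntegralPoint P)
    (hPtors : ∀ n : ℤ, 1 ≤ n → n • P ≠ 0)
    (n₁ n₂ : ℤ) (hn₁ : 1 < n₁) (hn₂ : 1 < n₂)
    (h₁ : IsIntegralPoint (n₁ • P)) (h₂ : IsIntegralPoint (n₂ • P)) :
    n₁ = n₂ := by
  have hP : ¬IsOfFinAddOrder P := by
    rw [isOfFinAddOrder_iff_nsmul_eq_zero]
    rintro ⟨n, hn, h⟩
    exact hPtors n (mod_cast hn) (by rw [natCast_zsmul, h])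
  lift n₁ to ℕ using by omega
  lift n₂ to ℕ using by omega
  rw [natCast_zsmul] at h₁ h₂
  norm_cast at hn₁ hn₂ ⊢
  obtain ⟨⟨α, β⟩, h₀⟩ := exists_hasXRatio hsq.ne_zero hPint.ne_zero
  rcases Int.even_or_odd β with hβ | hβ
  · exact absurd (eq_one_of_isIntegralPoint_nsmul_of_even hsq hP hPint h₀ hβ h₁) hn₁.ne'
  · exact eq_of_isIntegralPoint_nsmul_of_odd hsq hP hPint h₀ hβ hn₁.ne' hn₂.ne' h₁ h₂
end

section
/- Let N be a positive squarefree integer and let P be a non-torsion point of E_N(ℚ) whose x-coordinate is an integer. Then 2P is not integral; in fact the x-coordinate of 2P is not an integer (its 2-adic valuation is negative). -/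
/-!
If `2P ≠ O` and `X = x(2P)`, then `X`, `X + N` and `X - N` are all squares in `ℚ`. If `X` were
`2`-integral, these would be squares of `2`-adic integers, hence squares modulo `4`. But a
three-term progression of squares modulo `4` has common difference `0`, so `4 ∣ N`, which is
impossible for squarefree `N`.
-/

open WeierstrassCurve.Affine

theorem eq_zero_of_isSquare_add_sub_zmod_four :
    ∀ {x n : ZMod 4}, IsSquare x → IsSquare (x + n) → IsSquare (x - n) → n = 0 := by
  decide

theorem isSquare_of_isSquare_algebraMap {R K : Type*} [CommRing R] [IsIntegrallyClosed R]
    [Field K] [Algebra R K] [IsFractionRing R K] {x : R}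
    (hx : IsSquare (algebraMap R K x)) : IsSquare x := by
  obtain ⟨r, hr⟩ := hx
  have hint : IsIntegral R r := .of_pow two_pos (by rw [sq, ← hr]; exact isIntegral_algebraMap)
  obtain ⟨s, rfl⟩ := IsIntegrallyClosed.isIntegral_iff.1 hint
  exact ⟨s, IsFractionRing.injective R K (by rw [hr, map_mul])⟩

theorem one_lt_norm_of_isSquare_add_sub {x : ℚ_[2]} {n : ℤ} (hn : ¬ 4 ∣ n) (hx : IsSquare x)
    (hadd : IsSquare (x + n)) (hsub : IsSquare (x - n)) : 1 < ‖x‖ := by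
  by_contra! hle
  obtain ⟨x, rfl⟩ : ∃ z : ℤ_[2], (z : ℚ_[2]) = x := ⟨⟨x, hle⟩, rfl⟩
  have isSquare_mod_four {z : ℤ_[2]} (hz : IsSquare (z : ℚ_[2])) :
      IsSquare (PadicInt.toZModPow 2 z) :=
    (isSquare_of_isSquare_algebraMap hz).map _
  have hadd' := isSquare_mod_four (z := x + n) (by push_cast; exact hadd)
  have hsub' := isSquare_mod_four (z := x - n) (by push_cast; exact hsub)
  rw [map_add, map_intCast] at hadd'
  rw [map_sub, map_intCast] at hsub'
  exact hn <| (ZMod.intCast_zmod_eq_zero_iff_dvd n 4).1 <|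
    eq_zero_of_isSquare_add_sub_zmod_four (isSquare_mod_four hx) hadd' hsub'

theorem padicValRat_two_neg_of_isSquare_add_sub {x : ℚ} {n : ℤ} (hn : ¬ 4 ∣ n) (hx : IsSquare x)
    (hadd : IsSquare (x + n)) (hsub : IsSquare (x - n)) : padicValRat 2 x < 0 := by
  have hnorm : 1 < ‖(x : ℚ_[2])‖ := one_lt_norm_of_isSquare_add_sub hn
    (hx.map (Rat.castHom ℚ_[2]))
    (by simpa using hadd.map (Rat.castHom ℚ_[2])) (by simpa using hsub.map (Rat.castHom ℚ_[2]))
  contrapose! hnorm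
  rwa [Padic.norm_le_one_iff_val_nonneg, Padic.valuation_ratCast]

theorem den_ne_one_of_padicValRat_neg {p : ℕ} {x : ℚ} (hx : padicValRat p x < 0) : x.den ≠ 1 := by
  intro hden
  rw [padicValRat_def, hden, padicValNat_one_right] at hx
  omega

theorem sq_div_add_eq_sq_div {F : Type*} [Field F] {x y n : F} (hy : 2 * y ≠ 0)
    (h : y ^ 2 = x ^ 3 - n ^ 2 * x) :
    ((x ^ 2 + n ^ 2) / (2 * y)) ^ 2 + n = ((x ^ 2 + 2 * n * x - n ^ 2) / (2 * y)) ^ 2 := by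
  rw [div_pow, div_pow, div_add' _ _ _ (pow_ne_zero 2 hy)]
  congr 1
  linear_combination 4 * n * h

namespace congruentCurve

variable {N : ℕ} {x y : ℚ}

theorem equation_iff : (congruentCurve N).Equation x y ↔ y ^ 2 = x ^ 3 - N ^ 2 * x := by
  rw [WeierstrassCurve.Affine.equation_iff]
  simp [congruentCurve, sub_eq_add_neg]

theorem negY_eq : (congruentCurve N).negY x y = -y := by
  simp [negY, congruentCurve]

theorem ne_negY_iff : y ≠ (congruentCurve N).negY x y ↔ y ≠ 0 := by
  rw [negY_eq, Ne, self_eq_neg]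

theorem addX_self (hy : y ≠ 0) (h : (congruentCurve N).Equation x y) :
    (congruentCurve N).addX x x ((congruentCurve N).slope x x y y) =
      ((x ^ 2 + N ^ 2) / (2 * y)) ^ 2 := by
  have hslope : (congruentCurve N).slope x x y y = (3 * x ^ 2 - N ^ 2) / (2 * y) := by
    rw [slope_of_Y_ne rfl (ne_negY_iff.2 hy), negY_eq]
    simp [congruentCurve, sub_eq_add_neg, two_mul]
  rw [hslope]
  simp only [addX, congruentCurve]
  field_simp
  linear_combination (-8 * x) * equation_iff.1 h

theorem padicValRat_two_addX_self_neg (hN : ¬ 4 ∣ N) (hy : y ≠ 0)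
    (h : (congruentCurve N).Equation x y) :
    padicValRat 2 ((congruentCurve N).addX x x ((congruentCurve N).slope x x y y)) < 0 := by
  have hy2 : 2 * y ≠ 0 := mul_ne_zero two_ne_zero hy
  have hxy : y ^ 2 = x ^ 3 - N ^ 2 * x := equation_iff.1 h
  rw [addX_self hy h]
  refine padicValRat_two_neg_of_isSquare_add_sub (n := N) (by exact_mod_cast hN) (.sq _) ?_ ?_
  · rw [Int.cast_natCast, sq_div_add_eq_sq_div hy2 hxy]
    exact .sq _
  · rw [Int.cast_natCast, ← neg_sq (N : ℚ), sub_eq_add_neg,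
      sq_div_add_eq_sq_div hy2 (by rwa [neg_sq])]
    exact .sq _

end congruentCurve

theorem stmt1_general (N : ℕ) (hN : ¬ 4 ∣ N) (P : (congruentCurve N).Point)
    (hP : (2 : ℤ) • P ≠ 0) :
    ∃ (x y : ℚ) (h : (congruentCurve N).Nonsingular x y),
      (2 : ℤ) • P = Point.some _ _ h ∧ x.den ≠ 1 ∧ padicValRat 2 x < 0 := by
  rw [two_zsmul] at hP ⊢
  obtain _ | ⟨x, y, h⟩ := P
  · exact absurd (add_zero 0) hP
  have hy : y ≠ (congruentCurve N).negY x y := fun hy => hP (Point.add_self_of_Y_eq hy)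
  have hval := congruentCurve.padicValRat_two_addX_self_neg hN (congruentCurve.ne_negY_iff.1 hy) h.1
  exact ⟨_, _, _, Point.add_self_of_Y_ne hy, den_ne_one_of_padicValRat_neg hval, hval⟩

theorem stmt1 (N : ℕ) (hN : 0 < N) (hsq : Squarefree N)
    (a b : ℤ) (h : (congruentCurve N).Nonsingular (a : ℚ) (b : ℚ))
    (hPtors : ∀ n : ℤ, 1 ≤ n →
      n • (WeierstrassCurve.Affine.Point.some _ _ h) ≠ 0) :
    ∃ (x y : ℚ) (h' : (congruentCurve N).Nonsingular x y),
      (2 : ℤ) • (WeierstrassCurve.Affine.Point.some _ _ h) =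
        WeierstrassCurve.Affine.Point.some _ _ h' ∧
      x.den ≠ 1 ∧ padicValRat 2 x < 0 :=
  stmt1_general N (fun h4 => absurd (hsq 2 h4) (by decide)) _ (hPtors 2 one_le_two)
end

section
/- Let N be a positive squarefree integer and let P be a non-torsion integral point of E_N(ℚ). Suppose that for some integer n ≥ 1 the point nP is integral and lies on the non-identity component of E_N(ℝ), i.e. the x-coordinate of nP is negative. Then n = 1. -/
/-!
Suppose `n ≥ 2` and put `Q = nP`, with `x(Q) < 0`. A double has `x`-coordinate greater than `N`,
so `n` is odd; replacing `P` by `-P` if necessary, `Q + P ∈ 4E` and `Q - P ∈ 2E`. For `a = x(P)`,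
`x = x(Q)`, the rational numbers `X = x(Q + P)` and `Z = x(Q - P)` are the roots of
`d T² - 2 s T + c²` with integers `d = (x - a)²`, `s = (xa - N²)(x + a)`, `c = xa + N²`. Since `X`
is a square and `Z > N`, the sign of `s` forces `-N ≤ a ≤ 0`, hence `0 < c ≤ 2N²`.

Now `Q + P = 2R` with `R ∈ 2E`, so `r = x(R) > N` and both `r` and `r + N` are squares. As `N` is
squarefree, `r = u / w` in lowest terms has `u` prime to `v = N w`, and duplication gives
`X = M² / (4D)` with `M = u² + v² > 2N²` and `D = u w (u² - v²)`. Clearing denominators in the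
quadratic equation yields `M ∣ 4 c D`, and then `M ∣ 2 c` by coprimality, so `M = 2 c` by size.
Hence `D` is prime to `c` and divides `d`, while `X Z d = c²` becomes `Z d = D`. Thus `Z ≤ 1 ≤ N`,
contrary to `Z > N`.
-/

section XCoord

open WeierstrassCurve.Affine Polynomial

variable {F : Type*} [Field F] {W : WeierstrassCurve.Affine F}

/-- The `x`-coordinate of a point of a Weierstrass curve, with the junk value `0` at infinity. It
lets the addition and duplication formulas be stated for points that are not given by their
coordinates. -/
def xCoord : W.Point → F
  | .zero => 0
  | .some x _ _ => x

@[simp]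
lemma xCoord_some {x y : F} (h : W.Nonsingular x y) : xCoord (.some x y h) = x := rfl

lemma xCoord_neg (P : W.Point) : xCoord (-P) = xCoord P := by
  cases P <;> rfl

lemma eq_or_eq_neg_of_xCoord_eq {P Q : W.Point} (hP : P ≠ 0) (hQ : Q ≠ 0)
    (h : xCoord P = xCoord Q) : P = Q ∨ P = -Q := by
  match P, Q with
  | .zero, _ => exact absurd rfl hP
  | _, .zero => exact absurd rfl hQ
  | .some .., .some .. => exact Point.X_eq_iff.mp h

lemma eval_Ψ₂Sq_of_equation {x y : F} (h : W.Equation x y) :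
    W.Ψ₂Sq.eval x = (y - W.negY x y) ^ 2 := by
  have e := (equation_iff _ _).mp h
  simp only [WeierstrassCurve.Ψ₂Sq, eval_add, eval_mul, eval_pow, eval_X, eval_C, negY,
    WeierstrassCurve.b₂, WeierstrassCurve.b₄, WeierstrassCurve.b₆]
  linear_combination -4 * e

variable [DecidableEq F]

lemma sq_sub_mul_xCoord_some_add_some {x₁ y₁ x₂ y₂ : F} (h₁ : W.Nonsingular x₁ y₁)
    (h₂ : W.Nonsingular x₂ y₂) (hx : x₁ ≠ x₂) :
    (x₁ - x₂) ^ 2 * xCoord (Point.some x₁ y₁ h₁ + Point.some x₂ y₂ h₂) =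
      (y₁ - y₂) ^ 2 + W.a₁ * (y₁ - y₂) * (x₁ - x₂) - (W.a₂ + x₁ + x₂) * (x₁ - x₂) ^ 2 := by
  have hsub : x₁ - x₂ ≠ 0 := sub_ne_zero.mpr hx
  simp only [Point.add_of_X_ne hx, xCoord_some, addX, slope_of_X_ne hx]
  field_simp
  ring

theorem sq_sub_mul_xCoord_add_add_xCoord_sub {P Q : W.Point} (hP : P ≠ 0) (hQ : Q ≠ 0)
    (h : xCoord P ≠ xCoord Q) :
    (xCoord P - xCoord Q) ^ 2 * (xCoord (P + Q) + xCoord (P - Q)) =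
      2 * (xCoord P + xCoord Q) * (xCoord P * xCoord Q) + W.b₂ * (xCoord P * xCoord Q)
        + W.b₄ * (xCoord P + xCoord Q) + W.b₆ := by
  match P, Q with
  | .zero, _ => exact absurd rfl hP
  | _, .zero => exact absurd rfl hQ
  | .some x₁ y₁ h₁, .some x₂ y₂ h₂ =>
    have e₁ := (equation_iff _ _).mp h₁.1
    have e₂ := (equation_iff _ _).mp h₂.1
    have hadd := sq_sub_mul_xCoord_some_add_some h₁ h₂ h
    have hsub := sq_sub_mul_xCoord_some_add_some h₁ ((nonsingular_neg ..).mpr h₂) h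
    rw [sub_eq_add_neg (Point.some ..), Point.neg_some]
    simp only [xCoord_some, negY, WeierstrassCurve.b₂, WeierstrassCurve.b₄,
      WeierstrassCurve.b₆] at *
    linear_combination hadd + hsub + 2 * e₁ + 2 * e₂

theorem sq_sub_mul_xCoord_add_mul_xCoord_sub {P Q : W.Point} (hP : P ≠ 0) (hQ : Q ≠ 0)
    (h : xCoord P ≠ xCoord Q) :
    (xCoord P - xCoord Q) ^ 2 * (xCoord (P + Q) * xCoord (P - Q)) =
      (xCoord P * xCoord Q) ^ 2 - W.b₄ * (xCoord P * xCoord Q)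
        - W.b₆ * (xCoord P + xCoord Q) - W.b₈ := by
  match P, Q with
  | .zero, _ => exact absurd rfl hP
  | _, .zero => exact absurd rfl hQ
  | .some x₁ y₁ h₁, .some x₂ y₂ h₂ =>
    have e₁ := (equation_iff _ _).mp h₁.1
    have e₂ := (equation_iff _ _).mp h₂.1
    have hadd := sq_sub_mul_xCoord_some_add_some h₁ h₂ h
    have hsub := sq_sub_mul_xCoord_some_add_some h₁ ((nonsingular_neg ..).mpr h₂) h
    refine mul_left_cancel₀ (pow_ne_zero 2 (sub_ne_zero.mpr h)) ?_
    rw [sub_eq_add_neg (Point.some ..), Point.neg_some]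
    simp only [xCoord_some]
    rw [show ∀ d X Z : F, d * (d * (X * Z)) = (d * X) * (d * Z) by intros; ring, hadd, hsub]
    simp only [negY, WeierstrassCurve.b₄, WeierstrassCurve.b₆, WeierstrassCurve.b₈]
    clear h hP hQ h₁ h₂ hadd hsub
    grind

lemma eval_Ψ₂Sq_xCoord_ne_zero {P : W.Point} (h : P + P ≠ 0) :
    W.Ψ₂Sq.eval (xCoord P) ≠ 0 := by
  match P with
  | .zero => exact absurd (add_zero _) h
  | .some x y hxy =>
    have hy : y ≠ W.negY x y := fun hy ↦ h (Point.add_self_of_Y_eq hy)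
    rw [xCoord_some, eval_Ψ₂Sq_of_equation hxy.1]
    exact pow_ne_zero 2 (sub_ne_zero.mpr hy)

theorem eval_Ψ₂Sq_mul_xCoord_add_self {P : W.Point} (h : P + P ≠ 0) :
    W.Ψ₂Sq.eval (xCoord P) * xCoord (P + P) = (W.Φ 2).eval (xCoord P) := by
  match P with
  | .zero => exact absurd (add_zero _) h
  | .some x y hxy =>
    have e := (equation_iff _ _).mp hxy.1
    have hy : y ≠ W.negY x y := fun hy ↦ h (Point.add_self_of_Y_eq hy)
    have hsub : y - W.negY x y ≠ 0 := sub_ne_zero.mpr hy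
    rw [xCoord_some, eval_Ψ₂Sq_of_equation hxy.1, Point.add_self_of_Y_ne hy, xCoord_some, addX,
      slope_of_Y_ne rfl hy]
    field_simp
    simp only [WeierstrassCurve.Φ_two, negY, eval_sub, eval_mul, eval_pow, eval_X, eval_C,
      WeierstrassCurve.b₄, WeierstrassCurve.b₆, WeierstrassCurve.b₈]
    grind

end XCoord

namespace congruentCurve

open Polynomial

variable {N : ℕ} {P Q : (congruentCurve N).Point}

lemma isSquare_pow_three_sub (P : (congruentCurve N).Point) :
    IsSquare (xCoord P ^ 3 - N ^ 2 * xCoord P) := by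
  match P with
  | .zero => simp [xCoord]
  | .some x y h =>
    refine ⟨y, ?_⟩
    have e := (WeierstrassCurve.Affine.equation_iff _ _).mp h.1
    simp only [congruentCurve] at e
    rw [xCoord_some]
    linear_combination -e

lemma xCoord_mem_Icc_or_le (P : (congruentCurve N).Point) :
    xCoord P ∈ Set.Icc (-N : ℚ) 0 ∨ N ≤ xCoord P := by
  have hsq : 0 ≤ xCoord P * (N - xCoord P) * (-N - xCoord P) := by
    linear_combination (isSquare_pow_three_sub P).nonneg
  by_contra! h
  rw [Set.mem_Icc, not_and_or, not_le, not_le] at h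
  obtain ⟨hneg | hpos, hN⟩ := h
  · have hx : xCoord P < 0 := hneg.trans_le (neg_nonpos.mpr N.cast_nonneg)
    exact hsq.not_gt <|
      mul_neg_of_neg_of_pos (mul_neg_of_neg_of_pos hx (sub_pos.mpr hN)) (sub_pos.mpr hneg)
  · have hx : -N - xCoord P < 0 := by linarith
    exact hsq.not_gt <| mul_neg_of_pos_of_neg (mul_pos hpos (sub_pos.mpr hN)) hx

lemma sq_sub_mul_xCoord_add_add_xCoord_sub (hP : P ≠ 0) (hQ : Q ≠ 0) (h : xCoord P ≠ xCoord Q) :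
    (xCoord P - xCoord Q) ^ 2 * (xCoord (P + Q) + xCoord (P - Q)) =
      2 * ((xCoord P * xCoord Q - N ^ 2) * (xCoord P + xCoord Q)) := by
  rw [_root_.sq_sub_mul_xCoord_add_add_xCoord_sub hP hQ h]
  simp only [congruentCurve, WeierstrassCurve.b₂, WeierstrassCurve.b₄, WeierstrassCurve.b₆]
  ring

lemma sq_sub_mul_xCoord_add_mul_xCoord_sub (hP : P ≠ 0) (hQ : Q ≠ 0) (h : xCoord P ≠ xCoord Q) :
    (xCoord P - xCoord Q) ^ 2 * (xCoord (P + Q) * xCoord (P - Q)) =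
      (xCoord P * xCoord Q + N ^ 2) ^ 2 := by
  rw [_root_.sq_sub_mul_xCoord_add_mul_xCoord_sub hP hQ h]
  simp only [congruentCurve, WeierstrassCurve.b₄, WeierstrassCurve.b₆, WeierstrassCurve.b₈]
  ring

lemma eval_Ψ₂Sq (x : ℚ) : (congruentCurve N).Ψ₂Sq.eval x = 4 * (x ^ 3 - N ^ 2 * x) := by
  simp only [congruentCurve, WeierstrassCurve.Ψ₂Sq, WeierstrassCurve.b₂, WeierstrassCurve.b₄,
    WeierstrassCurve.b₆, eval_add, eval_mul, eval_pow, eval_X, eval_C]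
  ring

lemma pow_three_sub_ne_zero (h : P + P ≠ 0) : xCoord P ^ 3 - N ^ 2 * xCoord P ≠ 0 := by
  simpa [eval_Ψ₂Sq] using eval_Ψ₂Sq_xCoord_ne_zero h

lemma mul_xCoord_add_self (h : P + P ≠ 0) :
    4 * (xCoord P ^ 3 - N ^ 2 * xCoord P) * xCoord (P + P) = (xCoord P ^ 2 + N ^ 2) ^ 2 := by
  rw [← eval_Ψ₂Sq, eval_Ψ₂Sq_mul_xCoord_add_self h]
  simp only [WeierstrassCurve.Φ_two, congruentCurve, WeierstrassCurve.b₄, WeierstrassCurve.b₆,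
    WeierstrassCurve.b₈, eval_sub, eval_mul, eval_pow, eval_X, eval_C]
  ring

lemma isSquare_xCoord_sub_of_even (hP : Even P) (h : P ≠ 0) {e : ℚ} (he : e ^ 3 = N ^ 2 * e) :
    IsSquare (xCoord P - e) := by
  obtain ⟨T, rfl⟩ := hP
  have hmul : (xCoord (T + T) - e) * (4 * (xCoord T ^ 3 - N ^ 2 * xCoord T)) =
      (xCoord T ^ 2 - 2 * e * xCoord T + N ^ 2 - 2 * e ^ 2) ^ 2 := by
    linear_combination mul_xCoord_add_self h - (8 * xCoord T + 4 * e) * he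
  rw [eq_div_of_mul_eq (mul_ne_zero four_ne_zero (pow_three_sub_ne_zero h)) hmul]
  exact (IsSquare.sq _).div (.mul ⟨2, by norm_num⟩ (isSquare_pow_three_sub T))

lemma lt_xCoord_of_even (hP : Even P) (h : P + P ≠ 0) : N < xCoord P := by
  have hP0 : P ≠ 0 := fun hP0 ↦ h (by rw [hP0, add_zero])
  have hle : N ≤ xCoord P := sub_nonneg.mp (isSquare_xCoord_sub_of_even hP hP0 (by ring)).nonneg
  refine hle.lt_of_ne fun hN ↦ pow_three_sub_ne_zero h ?_
  rw [← hN]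
  ring

end congruentCurve

lemma isCoprime_of_isSquare_of_isSquare_add_mul {N : ℕ} (hN : Squarefree N) {u w : ℤ}
    (huw : IsCoprime u w) (hu : IsSquare u) (h : IsSquare (u + N * w)) :
    IsCoprime u (N : ℤ) := by
  have hN' : Squarefree (N : ℤ) := Int.squarefree_natCast.mpr hN
  refine isCoprime_of_prime_dvd (fun h0 ↦ hN'.ne_zero h0.2) fun p hp hpu hpN ↦ ?_
  have sq_dvd {z : ℤ} (hz : IsSquare z) (hpz : p ∣ z) : p ^ 2 ∣ z := by
    obtain ⟨c, rfl⟩ := (isSquare_iff_exists_sq z).mp hz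
    exact pow_dvd_pow_of_dvd (hp.dvd_of_dvd_pow hpz) 2
  have hNw : p ^ 2 ∣ N * w :=
    (dvd_add_right (sq_dvd hu hpu)).mp (sq_dvd h (hpu.add (hpN.mul_right w)))
  have hpw : IsCoprime (p ^ 2) w := (hp.coprime_iff_not_dvd.mpr fun hpw ↦
    hp.not_isUnit (huw.isUnit_of_dvd' hpu hpw)).pow_left
  exact hp.not_isUnit (hN' p (sq p ▸ hpw.dvd_of_dvd_mul_right hNw))

lemma not_four_dvd_sq_add_sq {u v : ℤ} (h : IsCoprime u v) : ¬ 4 ∣ u ^ 2 + v ^ 2 := by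
  have sq_emod_four (z : ℤ) : z ^ 2 % 4 = 0 ∧ 2 ∣ z ∨ z ^ 2 % 4 = 1 := by
    rcases Int.even_or_odd z with hz | hz
    · obtain ⟨k, rfl⟩ := hz.two_dvd
      exact .inl ⟨by ring_nf; omega, dvd_mul_right 2 k⟩
    · exact .inr (Int.sq_mod_four_eq_one_of_odd hz)
  intro h4
  rcases sq_emod_four u with ⟨hu, hu2⟩ | hu <;> rcases sq_emod_four v with ⟨hv, hv2⟩ | hv
  · exact Int.prime_two.not_isUnit (h.isUnit_of_dvd' hu2 hv2)
  all_goals omega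

lemma isCoprime_two_pow_of_odd {m : ℤ} (hm : Odd m) (k : ℕ) : IsCoprime m (2 ^ k) :=
  (Int.isCoprime_two_right.mpr hm).pow_right

lemma dvd_two_mul_of_dvd_two_pow_mul {m c : ℤ} {k : ℕ} (hm : ¬ 4 ∣ m) (h : m ∣ 2 ^ k * c) :
    m ∣ 2 * c := by
  rcases Int.even_or_odd m with heven | hodd
  · obtain ⟨l, rfl⟩ := heven.two_dvd
    have hl : Odd l := by
      rw [← Int.not_even_iff_odd]
      exact fun hl ↦ hm (mul_dvd_mul_left 2 hl.two_dvd)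
    exact mul_dvd_mul_left 2 <|
      (isCoprime_two_pow_of_odd hl k).dvd_of_dvd_mul_left ((dvd_mul_left l 2).trans h)
  · exact ((isCoprime_two_pow_of_odd hodd k).dvd_of_dvd_mul_left h).mul_left 2

lemma isCoprime_sq_add_sq_left {R : Type*} [CommRing R] {u v : R} (h : IsCoprime u v) :
    IsCoprime (u ^ 2 + v ^ 2) u := by
  rw [add_comm, sq u, IsCoprime.add_mul_left_left_iff]
  exact h.symm.pow_left

lemma isCoprime_sq_add_sq_right {R : Type*} [CommRing R] {u v : R} (h : IsCoprime u v) :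
    IsCoprime (u ^ 2 + v ^ 2) v :=
  add_comm (v ^ 2) (u ^ 2) ▸ isCoprime_sq_add_sq_left h.symm

lemma sq_add_sq_dvd_two_mul {u v w c : ℤ} (huv : IsCoprime u v) (hwv : w ∣ v)
    (h : u ^ 2 + v ^ 2 ∣ 4 * c * (u * w * (u ^ 2 - v ^ 2))) : u ^ 2 + v ^ 2 ∣ 2 * c := by
  have hu : IsCoprime (u ^ 2 + v ^ 2) u := isCoprime_sq_add_sq_left huv
  have hw : IsCoprime (u ^ 2 + v ^ 2) w :=
    (isCoprime_sq_add_sq_right huv).of_isCoprime_of_dvd_right hwv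
  have h8 : u ^ 2 + v ^ 2 ∣ u ^ 3 * w * (2 ^ 3 * c) := by
    have key : u ^ 3 * w * (2 ^ 3 * c) =
        4 * c * (u * w * (u ^ 2 - v ^ 2)) + (u ^ 2 + v ^ 2) * (4 * c * (u * w)) := by ring
    exact key ▸ h.add (dvd_mul_right _ _)
  exact dvd_two_mul_of_dvd_two_pow_mul (not_four_dvd_sq_add_sq huv)
    ((hu.pow_right.mul_right hw).dvd_of_dvd_mul_left h8)

lemma isCoprime_of_sq_add_sq_eq_two_mul {u v w c : ℤ} (huv : IsCoprime u v) (hwv : w ∣ v)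
    (h : u ^ 2 + v ^ 2 = 2 * c) : IsCoprime c (u * w * (u ^ 2 - v ^ 2)) := by
  have hc : c ∣ u ^ 2 + v ^ 2 := h ▸ dvd_mul_left c 2
  have hcu : IsCoprime c u := (isCoprime_sq_add_sq_left huv).of_isCoprime_of_dvd_left hc
  have hcw : IsCoprime c w := ((isCoprime_sq_add_sq_right huv).of_isCoprime_of_dvd_left
    hc).of_isCoprime_of_dvd_right hwv
  have hcodd : Odd c := by
    rw [← Int.not_even_iff_odd]
    exact fun heven ↦ not_four_dvd_sq_add_sq huv (h ▸ mul_dvd_mul_left 2 heven.two_dvd)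
  have hcsub : IsCoprime c (u ^ 2 - v ^ 2) := by
    rw [show u ^ 2 - v ^ 2 = 2 * u ^ 2 + c * -2 by linear_combination -h,
      IsCoprime.add_mul_left_right_iff]
    exact (Int.isCoprime_two_right.mpr hcodd).mul_right hcu.pow_right
  exact (hcu.mul_right hcw).mul_right hcsub

-- With `M = u² + v²` and `D = u w (u² - v²)`, the hypothesis `h` says that `M² / (4D)` is a root of
-- `d T² - 2 s T + c²`.
theorem sq_add_sq_eq_two_mul_and_dvd {u v w c d s : ℤ} (huv : IsCoprime u v) (hwv : w ∣ v)
    (hc : 0 < c) (hcM : c < u ^ 2 + v ^ 2)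
    (h : (u ^ 2 + v ^ 2) ^ 4 * d + 16 * c ^ 2 * (u * w * (u ^ 2 - v ^ 2)) ^ 2 =
      8 * s * (u * w * (u ^ 2 - v ^ 2)) * (u ^ 2 + v ^ 2) ^ 2) :
    u ^ 2 + v ^ 2 = 2 * c ∧ u * w * (u ^ 2 - v ^ 2) ∣ d := by
  have hdvd := sq_add_sq_dvd_two_mul (c := c) huv hwv
  have hcop := isCoprime_of_sq_add_sq_eq_two_mul (c := c) huv hwv
  generalize u ^ 2 + v ^ 2 = M at *
  generalize u * w * (u ^ 2 - v ^ 2) = D at *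
  have hM : M = 2 * c := by
    have hsq : M ^ 2 ∣ (4 * c * D) ^ 2 := ⟨8 * s * D - M ^ 2 * d, by linear_combination h⟩
    obtain ⟨k, hk⟩ := hdvd ((Int.pow_dvd_pow_iff two_ne_zero).mp hsq)
    have hk0 : 0 < k := by nlinarith
    have hk2 : k < 2 := by nlinarith
    obtain rfl : k = 1 := by omega
    linarith
  refine ⟨hM, (hcop hM).symm.pow_right (n := 2) |>.dvd_of_dvd_mul_left ⟨2 * s - D, ?_⟩⟩
  have hc2 : 16 * c ^ 2 ≠ 0 := by positivity
  refine mul_left_cancel₀ hc2 ?_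
  rw [hM] at h
  linear_combination h

lemma exists_isCoprime_mul_and_mul_eq {N : ℕ} (hN : Squarefree N) {r : ℚ} (hr : IsSquare r)
    (hrN : IsSquare (r + N)) : ∃ u w : ℤ, IsCoprime u (N * w) ∧ 0 < w ∧ r * w = u := by
  have huw : IsCoprime r.num (r.den : ℤ) := Int.isCoprime_iff_gcd_eq_one.mpr r.reduced
  obtain ⟨hu, hw⟩ := Rat.isSquare_iff.mp hr
  have hsq : IsSquare (r.num + N * r.den : ℤ) := by
    rw [← Rat.isSquare_intCast_iff]
    have hmul : ((r.num + N * r.den : ℤ) : ℚ) = (r + N) * r.den := by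
      push_cast
      rw [add_mul, Rat.mul_den_eq_num]
    exact hmul ▸ hrN.mul (hw.map (Nat.castRingHom ℚ))
  exact ⟨r.num, r.den, (isCoprime_of_isSquare_of_isSquare_add_mul hN huw hu hsq).mul_right huw,
    mod_cast r.den_pos, Rat.mul_den_eq_num r⟩

lemma two_mul_sq_lt_sq_add_sq {N u w : ℤ} (hN : 0 ≤ N) (hw : 0 < w) (hu : N * w < u) :
    2 * N ^ 2 < u ^ 2 + (N * w) ^ 2 := by
  have hNw : N ≤ N * w := le_mul_of_one_le_right hN hw
  nlinarith

lemma pow_four_mul_add_eq_of_add_of_mul {R : Type*} [CommRing R] {M D c d s X Z : R}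
    (hX : 4 * D * X = M ^ 2) (hadd : d * (X + Z) = 2 * s) (hmul : d * (X * Z) = c ^ 2) :
    M ^ 4 * d + 16 * c ^ 2 * D ^ 2 = 8 * s * D * M ^ 2 := by
  rw [show M ^ 4 = (M ^ 2) ^ 2 by ring, ← hX, ← hmul]
  linear_combination 16 * D ^ 2 * X * hadd

lemma mul_eq_of_mul_eq_sq {K : Type*} [Field K] [CharZero K] {D c d X Z : K} (hc : c ≠ 0)
    (hX : 4 * D * X = (2 * c) ^ 2) (hmul : d * (X * Z) = c ^ 2) : d * Z = D := by
  have hX0 : X ≠ 0 := by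
    rintro rfl
    exact pow_ne_zero 2 hc (by simpa using hmul.symm)
  refine mul_right_cancel₀ hX0 (mul_left_cancel₀ (OfNat.ofNat_ne_zero 4) ?_)
  linear_combination 4 * hmul - hX

theorem le_one_of_isSquare_of_add_of_mul {N : ℕ} (hN : Squarefree N) {r X Z : ℚ} {c d s : ℤ}
    (hr : IsSquare r) (hrN : IsSquare (r + N)) (hNr : N < r)
    (hX : 4 * (r ^ 3 - N ^ 2 * r) * X = (r ^ 2 + N ^ 2) ^ 2)
    (hadd : d * (X + Z) = 2 * s) (hmul : d * (X * Z) = c ^ 2)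
    (hd : 0 < d) (hc : 0 < c) (hcN : c ≤ 2 * N ^ 2) : Z ≤ 1 := by
  obtain ⟨u, w, hcop, hw, hrw⟩ := exists_isCoprime_mul_and_mul_eq hN hr hrN
  have hw' : (0 : ℚ) < w := mod_cast hw
  have hu : N * w < u := by
    have := (mul_lt_mul_iff_left₀ hw').mpr hNr
    exact_mod_cast hrw ▸ this
  have hDX : 4 * (u * w * (u ^ 2 - (N * w) ^ 2) : ℤ) * X =
      ((u ^ 2 + (N * w) ^ 2 : ℤ) : ℚ) ^ 2 := by
    push_cast
    rw [← hrw]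
    linear_combination w ^ 4 * hX
  have hquad := pow_four_mul_add_eq_of_add_of_mul hDX hadd hmul
  obtain ⟨hM, hDd⟩ := sq_add_sq_eq_two_mul_and_dvd hcop (dvd_mul_left w N) hc
    (hcN.trans_lt (two_mul_sq_lt_sq_add_sq (Int.natCast_nonneg N) hw hu))
    (mod_cast hquad)
  have hDZ : d * Z = (u * w * (u ^ 2 - (N * w) ^ 2) : ℤ) :=
    mul_eq_of_mul_eq_sq (mod_cast hc.ne') (by rw [hDX, hM]; push_cast; rfl) hmul
  have hZ : d * Z ≤ d * 1 := by
    rw [hDZ, mul_one]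
    exact_mod_cast Int.le_of_dvd hd hDd
  exact le_of_mul_le_mul_left hZ (mod_cast hd)

namespace congruentCurve

variable {N : ℕ} {P Q : (congruentCurve N).Point}

lemma xCoord_mem_Icc_of_even_add_of_even_sub (hP : P ≠ 0) (hne : xCoord Q ≠ xCoord P)
    (hQ : xCoord Q ∈ Set.Icc (-N : ℚ) 0) (hQ0 : Q ≠ 0) (hadd : Even (Q + P)) (hadd0 : Q + P ≠ 0)
    (hsub : Even (Q - P)) (hsub0 : Q - P + (Q - P) ≠ 0) :
    xCoord P ∈ Set.Icc (-N : ℚ) 0 := by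
  refine (xCoord_mem_Icc_or_le P).resolve_right fun hNP ↦ ?_
  have hN : (0 : ℚ) ≤ N := N.cast_nonneg
  have hX : 0 ≤ xCoord (Q + P) := by
    simpa using (isSquare_xCoord_sub_of_even hadd hadd0 (e := 0) (by ring)).nonneg
  have hZ : 0 < xCoord (Q - P) := hN.trans_lt (lt_xCoord_of_even hsub hsub0)
  have hpos : 0 < (xCoord Q - xCoord P) ^ 2 * (xCoord (Q + P) + xCoord (Q - P)) :=
    mul_pos (sq_pos_of_ne_zero (sub_ne_zero.mpr hne)) (add_pos_of_nonneg_of_pos hX hZ)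
  have hmul : xCoord Q * xCoord P ≤ 0 := mul_nonpos_of_nonpos_of_nonneg hQ.2 (hN.trans hNP)
  rw [sq_sub_mul_xCoord_add_add_xCoord_sub hQ0 hP hne] at hpos
  have h1 : xCoord Q * xCoord P - N ^ 2 ≤ 0 := by linarith [sq_nonneg (N : ℚ)]
  have h2 : 0 ≤ xCoord Q + xCoord P := by linarith [hQ.1]
  linarith [mul_nonpos_of_nonpos_of_nonneg h1 h2]

theorem xCoord_nonneg_of_add_eq_four_zsmul (hN : Squarefree N) {S : (congruentCurve N).Point}
    {a x : ℤ} (hP : P ≠ 0) (ha : xCoord P = a) (hx : xCoord Q = x) (hadd : Q + P = (4 : ℤ) • S)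
    (hadd0 : Q + P ≠ 0) (hsub : Even (Q - P)) (hsub0 : Q - P + (Q - P) ≠ 0) :
    0 ≤ xCoord Q := by
  by_contra! hQneg
  have hQ0 : Q ≠ 0 := by
    rintro rfl
    exact hQneg.ne rfl
  have hne : xCoord Q ≠ xCoord P := fun hxeq ↦
    (eq_or_eq_neg_of_xCoord_eq hQ0 hP hxeq).elim
      (fun h ↦ hsub0 (by rw [h, sub_self, add_zero])) (fun h ↦ hadd0 (by rw [h, neg_add_cancel]))
  have hR : Even ((2 : ℤ) • S) := ⟨S, two_zsmul S⟩
  have hRR : Q + P = (2 : ℤ) • S + (2 : ℤ) • S := by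
    rw [hadd, ← add_zsmul]
    rfl
  have hRR0 : (2 : ℤ) • S + (2 : ℤ) • S ≠ 0 := hRR ▸ hadd0
  have hR0 : (2 : ℤ) • S ≠ 0 := fun hR0 ↦ hRR0 (by rw [hR0, add_zero])
  have hN1 : (1 : ℚ) ≤ N := mod_cast hN.ne_zero.bot_lt
  have hQ : xCoord Q ∈ Set.Icc (-N : ℚ) 0 :=
    (xCoord_mem_Icc_or_le Q).resolve_right (by linarith)
  have hPmem :=
    xCoord_mem_Icc_of_even_add_of_even_sub hP hne hQ hQ0 ⟨_, hRR⟩ hadd0 hsub hsub0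
  have hc : 0 < xCoord Q * xCoord P + N ^ 2 := add_pos_of_nonneg_of_pos
    (mul_nonneg_of_nonpos_of_nonpos hQ.2 hPmem.2) (by positivity)
  have hcN : xCoord Q * xCoord P + N ^ 2 ≤ 2 * N ^ 2 := by
    nlinarith [hQ.1, hQ.2, hPmem.1, hPmem.2]
  have hsum := sq_sub_mul_xCoord_add_add_xCoord_sub hQ0 hP hne
  have hprod := sq_sub_mul_xCoord_add_mul_xCoord_sub hQ0 hP hne
  rw [ha, hx] at hne hc hcN hsum hprod
  have hZ : xCoord (Q - P) ≤ 1 :=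
    le_one_of_isSquare_of_add_of_mul hN (r := xCoord ((2 : ℤ) • S)) (X := xCoord (Q + P))
      (c := x * a + N ^ 2) (d := (x - a) ^ 2) (s := (x * a - N ^ 2) * (x + a))
      (by simpa using isSquare_xCoord_sub_of_even hR hR0 (e := 0) (by ring))
      (by simpa using isSquare_xCoord_sub_of_even hR hR0 (e := -N) (by ring))
      (lt_xCoord_of_even hR hRR0) (hRR ▸ mul_xCoord_add_self hRR0)
      (mod_cast hsum) (mod_cast hprod) (sq_pos_of_ne_zero (sub_ne_zero.mpr (mod_cast hne)))
      (mod_cast hc) (mod_cast hcN)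
  linarith [lt_xCoord_of_even hsub hsub0]

theorem xCoord_zsmul_nonneg (hN : Squarefree N) (hP : ∀ m : ℤ, 1 ≤ m → m • P ≠ 0) {a x n : ℤ}
    (hn : 2 ≤ n) (ha : xCoord P = a) (hx : xCoord (n • P) = x) : 0 ≤ xCoord (n • P) := by
  have hP0 : P ≠ 0 := one_zsmul P ▸ hP 1 le_rfl
  have hdbl (m : ℤ) (hm : 1 ≤ m) : m • P + m • P ≠ 0 := add_zsmul P m m ▸ hP (m + m) (by omega)
  have hsucc : (n + 1) • P = n • P + P := add_one_zsmul P n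
  have hpred : (n - 1) • P = n • P + -P := by module
  have hsucc0 : n • P + P ≠ 0 := hsucc ▸ hP (n + 1) (by omega)
  have hpred0 : n • P + -P ≠ 0 := hpred ▸ hP (n - 1) (by omega)
  have hsucc_dbl : n • P - -P + (n • P - -P) ≠ 0 := by
    rw [sub_neg_eq_add, ← hsucc]
    exact hdbl (n + 1) (by omega)
  have hpred_dbl : n • P - P + (n • P - P) ≠ 0 := by
    rw [sub_eq_add_neg, ← hpred]
    exact hdbl (n - 1) (by omega)
  obtain ⟨k, rfl | rfl | rfl⟩ : ∃ k, n = k + k ∨ n = 4 * k + 1 ∨ n = 4 * k + 3 :=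
    ⟨if n % 2 = 0 then n / 2 else n / 4, by split_ifs <;> omega⟩
  · have heven : Even ((k + k) • P) := ⟨k • P, add_zsmul P k k⟩
    exact N.cast_nonneg.trans (lt_xCoord_of_even heven (hdbl _ (by omega))).le
  · exact xCoord_nonneg_of_add_eq_four_zsmul (S := k • P) hN (neg_ne_zero.mpr hP0)
      ((xCoord_neg P).trans ha) hx (by module) hpred0 ⟨(2 * k + 1) • P, by module⟩ hsucc_dbl
  · exact xCoord_nonneg_of_add_eq_four_zsmul (S := (k + 1) • P) hN hP0 ha hx (by module)
      hsucc0 ⟨(2 * k + 1) • P, by module⟩ hpred_dbl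

end congruentCurve

theorem stmt2 (N : ℕ) (hN : 0 < N) (hsq : Squarefree N)
    (a b : ℤ) (h : (congruentCurve N).Nonsingular (a : ℚ) (b : ℚ))
    (hPtors : ∀ m : ℤ, 1 ≤ m →
      m • (WeierstrassCurve.Affine.Point.some _ _ h) ≠ 0)
    (n : ℤ) (hn : 1 ≤ n)
    (x y : ℚ) (h' : (congruentCurve N).Nonsingular x y)
    (hnP : n • (WeierstrassCurve.Affine.Point.some _ _ h) =
      WeierstrassCurve.Affine.Point.some _ _ h')
    (hxint : x.den = 1) (hxneg : x < 0) :
    n = 1 := by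
  by_contra hn1
  have hx : xCoord (n • WeierstrassCurve.Affine.Point.some _ _ h) = x.num := by
    rw [hnP, xCoord_some, Rat.coe_int_num_of_den_eq_one hxint]
  have hnonneg :=
    congruentCurve.xCoord_zsmul_nonneg hsq hPtors (by omega) (xCoord_some h) hx
  rw [hnP, xCoord_some] at hnonneg
  exact hxneg.not_ge hnonneg
end

section
/- Let N be an odd positive integer and let P = (a, b) be a non-torsion point of E_N(ℚ) with a, b ∈ ℤ and a odd. Then for every odd integer n ≥ 1, ord₂(ψ_n(P)) = (n² − 1)/4, and for every even integer n ≥ 2, ord₂(ψ_n(P)) ≥ n²/4 + ord₂(b). -/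
/-- The congruent number curve `E_N : y² = x³ - N²x` over `ℤ`. -/
def congruentCurveZ (N : ℕ) : WeierstrassCurve ℤ :=
  { a₁ := 0, a₂ := 0, a₃ := 0, a₄ := -(N : ℤ) ^ 2, a₆ := 0 }

/-- The value `ψₙ(P)` of the `n`-th division polynomial of `E_N` at the integral point
`P = (a, b)`. -/
noncomputable def psiEN (N : ℕ) (a b : ℤ) (n : ℤ) : ℤ :=
  ((congruentCurveZ N).Ψ n).evalEval a b

/-!
On `y² = x³ - D x` with `D ≡ 1 mod 8` and at an integral point `(a, b)` with `a` odd, `b` is even,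
`Ψ₃(a) = 4c` with `c ≡ -1 mod 4`, and `preΨ₄(a) = 8d` with `d ≡ 2 mod 4`. Elliptic divisibility
sequences are homogeneous, so `ψₙ(a, b)` is `2 ^ ⌊(n² - 1) / 4⌋`, times `2b` if `n` is even, times
the `n`-th term of the auxiliary sequence with parameters `2b⁴, c, d`. Modulo `4` those
parameters are `0, -1, 2`, for which the sequence is `0, 1, 1, -1, 2, 1, 3, -1, 4, 1, …`: the term
of index `2k` is `k` and the term of index `2k + 1` is `(-1)ᵏ`. Hence the terms of odd index are
odd, while the recursion for the term of index `4k` shows that it is the term of index `2k` times a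
number that is `2 mod 4`, so the terms of index `2k` have the same `2`-adic valuation as `k`.
In particular no `ψₙ(a, b)` with `n ≥ 1` vanishes as soon as `b ≠ 0`.
-/

section Homogeneity
variable {R : Type*} [CommRing R]

lemma preNormEDS'_pow_mul (r b c d : R) (n : ℕ) :
    preNormEDS' (r ^ 3 * b) (r ^ 2 * c) (r ^ 3 * d) n =
      r ^ ((n ^ 2 - 1) / 4) * preNormEDS' b c d n := by
  induction n using normEDSRec with
  | zero | one | two | three | four => simp
  | even m ih₁ ih₂ ih₃ ih₄ ih₅ =>
    have weight_left : ((2 * (m + 3)) ^ 2 - 1) / 4 = 2 * (((m + 2) ^ 2 - 1) / 4) +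
        ((m + 3) ^ 2 - 1) / 4 + ((m + 5) ^ 2 - 1) / 4 := by
      obtain ⟨j, rfl | rfl⟩ := m.even_or_odd' <;> ring_nf <;> omega
    have weight_right : ((2 * (m + 3)) ^ 2 - 1) / 4 = ((m + 1) ^ 2 - 1) / 4 +
        ((m + 3) ^ 2 - 1) / 4 + 2 * (((m + 4) ^ 2 - 1) / 4) := by
      obtain ⟨j, rfl | rfl⟩ := m.even_or_odd' <;> ring_nf <;> omega
    rw [preNormEDS'_even, preNormEDS'_even, ih₁, ih₂, ih₃, ih₄, ih₅, mul_sub]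
    nth_rewrite 1 [weight_left]
    rw [weight_right]
    ring
  | odd m ih₁ ih₂ ih₃ ih₄ =>
    have weight_left : ((2 * (m + 2) + 1) ^ 2 - 1) / 4 = ((m + 4) ^ 2 - 1) / 4 +
        3 * (((m + 2) ^ 2 - 1) / 4) + if Even m then 3 else 0 := by
      obtain ⟨j, rfl | rfl⟩ := m.even_or_odd' <;>
        simp only [even_two_mul, Nat.not_even_two_mul_add_one, if_true, if_false] <;>
        ring_nf <;> omega
    have weight_right : ((2 * (m + 2) + 1) ^ 2 - 1) / 4 = ((m + 1) ^ 2 - 1) / 4 +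
        3 * (((m + 3) ^ 2 - 1) / 4) + if Even m then 0 else 3 := by
      obtain ⟨j, rfl | rfl⟩ := m.even_or_odd' <;>
        simp only [even_two_mul, Nat.not_even_two_mul_add_one, if_true, if_false] <;>
        ring_nf <;> omega
    rw [preNormEDS'_odd, preNormEDS'_odd, ih₁, ih₂, ih₃, ih₄, mul_sub]
    nth_rewrite 1 [weight_left]
    rw [weight_right]
    split_ifs <;> ring

lemma normEDS_pow_mul (r b c d : R) (n : ℕ) :
    normEDS (r * b) (r ^ 2 * c) (r ^ 3 * d) n =
      r ^ ((n ^ 2 - 1) / 4) * preNormEDS (r * b ^ 4) c d n * if Even n then r * b else 1 := by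
  rw [normEDS_ofNat, preNormEDS_ofNat, ← preNormEDS'_pow_mul]
  ring_nf

end Homogeneity

section ClosedForm
variable {R : Type*} [CommRing R]

lemma preNormEDS'_zero_neg_one_two_eq (n k : ℕ) :
    (n = 2 * k → preNormEDS' (0 : R) (-1) 2 n = k) ∧
      (n = 2 * k + 1 → preNormEDS' (0 : R) (-1) 2 n = (-1) ^ k) := by
  have sign_sq (j : ℕ) : ((-1 : R) ^ j) ^ 2 = 1 := by simp [← pow_mul]
  induction n using normEDSRec generalizing k with
  | zero | one | two | three | four =>
    constructor <;> intro hk <;> have : k ≤ 2 := by omega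
    all_goals interval_cases k <;> first | omega | simp
  | even m ih₁ ih₂ ih₃ ih₄ ih₅ =>
    refine ⟨fun hk ↦ ?_, fun hk ↦ by omega⟩
    obtain rfl : k = m + 3 := by omega
    rw [preNormEDS'_even]
    obtain ⟨j, rfl | rfl⟩ := m.even_or_odd'
    · rw [(ih₁ j).2 (by omega), (ih₂ (j + 1)).1 (by omega), (ih₃ (j + 1)).2 (by omega),
        (ih₄ (j + 2)).1 (by omega), (ih₅ (j + 2)).2 (by omega)]
      push_cast
      linear_combination (2 * j + 3) * sign_sq j
    · rw [(ih₁ (j + 1)).1 (by omega), (ih₂ (j + 1)).2 (by omega), (ih₃ (j + 2)).1 (by omega),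
        (ih₄ (j + 2)).2 (by omega), (ih₅ (j + 3)).1 (by omega)]
      push_cast
      linear_combination (2 * j + 4) * sign_sq j
  | odd m ih₁ ih₂ ih₃ ih₄ =>
    refine ⟨fun hk ↦ by omega, fun hk ↦ ?_⟩
    obtain rfl : k = m + 2 := by omega
    rw [preNormEDS'_odd]
    obtain ⟨j, rfl | rfl⟩ := m.even_or_odd'
    · rw [(ih₁ j).2 (by omega), (ih₃ (j + 1)).2 (by omega), if_pos (even_two_mul j),
        if_pos (even_two_mul j)]
      linear_combination ((-1) ^ j) ^ 2 * sign_sq j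
    · rw [(ih₂ (j + 1)).2 (by omega), (ih₄ (j + 2)).2 (by omega),
        if_neg (Nat.not_even_two_mul_add_one j), if_neg (Nat.not_even_two_mul_add_one j)]
      linear_combination -((-1) ^ j) ^ 2 * sign_sq j

lemma preNormEDS_zero_neg_one_two_two_mul (m : ℤ) :
    preNormEDS (0 : R) (-1) 2 (2 * m) = m := by
  induction m using Int.negInduction with
  | nat k =>
    rw [show (2 * k : ℤ) = (2 * k : ℕ) by simp, preNormEDS_ofNat]
    simpa using (preNormEDS'_zero_neg_one_two_eq (R := R) _ k).1 rfl
  | neg ih k => rw [mul_neg, preNormEDS_neg, ih, Int.cast_neg]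

lemma preNormEDS_zero_neg_one_two_sq_of_odd {n : ℤ} (hn : Odd n) :
    preNormEDS (0 : R) (-1) 2 n ^ 2 = 1 := by
  induction n using Int.negInduction with
  | nat n =>
    obtain ⟨k, rfl⟩ := (Int.odd_coe_nat n).1 hn
    rw [preNormEDS_ofNat, (preNormEDS'_zero_neg_one_two_eq _ k).2 rfl, ← pow_mul, pow_mul']
    simp
  | neg ih n => rw [preNormEDS_neg, neg_sq, ih n (by simpa using hn)]

end ClosedForm

lemma preNormEDS_modEq {n b b' c c' d d' : ℤ} (hb : b ≡ b' [ZMOD n]) (hc : c ≡ c' [ZMOD n])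
    (hd : d ≡ d' [ZMOD n]) (k : ℤ) : preNormEDS b c d k ≡ preNormEDS b' c' d' k [ZMOD n] := by
  rw [← Int.modEq_natAbs, ← ZMod.intCast_eq_intCast_iff] at *
  simp only [← eq_intCast (Int.castRingHom (ZMod _)), map_preNormEDS] at *
  rw [hb, hc, hd]

section PadicValInt
variable {p : ℕ} [hp : Fact p.Prime]

lemma emultiplicity_eq_padicValInt {z : ℤ} (hz : z ≠ 0) :
    emultiplicity (p : ℤ) z = padicValInt p z := by
  rw [padicValInt.of_ne_one_ne_zero hp.out.ne_one hz]
  exact (padicValRat.finite_int_prime_iff.2 hz).emultiplicity_eq_multiplicity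

lemma padicValInt_eq_of_emultiplicity_eq {z : ℤ} {n : ℕ} (h : emultiplicity (p : ℤ) z = n) :
    padicValInt p z = n := by
  have hz : z ≠ 0 := by
    rintro rfl
    simp at h
  exact_mod_cast (emultiplicity_eq_padicValInt hz).symm.trans h

end PadicValInt

section TwoAdic

lemma two_mul_pow_four_modEq_zero {b : ℤ} (hb : Even b) : 2 * b ^ 4 ≡ 0 [ZMOD 4] := by
  obtain ⟨k, rfl⟩ := hb.two_dvd
  exact Int.modEq_zero_iff_dvd.2 ⟨8 * k ^ 4, by ring⟩

lemma odd_iff_of_modEq_four {x y : ℤ} (h : x ≡ y [ZMOD 4]) : Odd x ↔ Odd y := by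
  rw [Int.odd_iff, Int.odd_iff, h.of_dvd (show (2 : ℤ) ∣ 4 by decide)]

lemma emultiplicity_two_eq_zero_of_odd {u : ℤ} (hu : Odd u) : emultiplicity 2 u = 0 :=
  emultiplicity_eq_zero.2 (by rwa [← even_iff_two_dvd, Int.not_even_iff_odd])

variable {b c d : ℤ} (hb : b ≡ 0 [ZMOD 4]) (hc : c ≡ -1 [ZMOD 4]) (hd : d ≡ 2 [ZMOD 4])
include hb hc hd

lemma preNormEDS_two_mul_modEq_four (m : ℤ) : preNormEDS b c d (2 * m) ≡ m [ZMOD 4] := by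
  simpa [preNormEDS_zero_neg_one_two_two_mul] using preNormEDS_modEq hb hc hd (2 * m)

lemma preNormEDS_sq_modEq_four_of_odd {n : ℤ} (hn : Odd n) :
    preNormEDS b c d n ^ 2 ≡ 1 [ZMOD 4] := by
  simpa [preNormEDS_zero_neg_one_two_sq_of_odd hn] using (preNormEDS_modEq hb hc hd n).pow 2

lemma exists_odd_preNormEDS_four_mul (m : ℤ) :
    ∃ u, Odd u ∧ preNormEDS b c d (2 * (2 * m)) = 2 * u * preNormEDS b c d (2 * m) := by
  have even_term := preNormEDS_two_mul_modEq_four hb hc hd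
  have odd_term {n : ℤ} := preNormEDS_sq_modEq_four_of_odd hb hc hd (n := n)
  have cofactor : preNormEDS b c d (2 * m - 1) ^ 2 * preNormEDS b c d (2 * (m + 1)) -
      preNormEDS b c d (2 * (m - 1)) * preNormEDS b c d (2 * m + 1) ^ 2 ≡ 2 [ZMOD 4] := by
    convert ((odd_term (n := 2 * m - 1) ⟨m - 1, by ring⟩).mul (even_term (m + 1))).sub
      ((even_term (m - 1)).mul (odd_term (odd_two_mul_add_one m))) using 1
    ring
  obtain ⟨w, hw⟩ := cofactor.symm.dvd
  refine ⟨2 * w + 1, odd_two_mul_add_one w, ?_⟩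
  rw [preNormEDS_even, show 2 * m + 2 = 2 * (m + 1) by ring, show 2 * m - 2 = 2 * (m - 1) by ring]
  linear_combination preNormEDS b c d (2 * m) * hw

lemma emultiplicity_two_preNormEDS_of_odd {n : ℤ} (hn : Odd n) :
    emultiplicity 2 (preNormEDS b c d n) = 0 := by
  have odd_sq := (odd_iff_of_modEq_four (preNormEDS_sq_modEq_four_of_odd hb hc hd hn)).2 odd_one
  exact emultiplicity_two_eq_zero_of_odd ((Int.odd_pow' two_ne_zero).1 odd_sq)

lemma emultiplicity_two_preNormEDS_two_mul (k : ℕ) :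
    emultiplicity 2 (preNormEDS b c d (2 * k)) = emultiplicity 2 (k : ℤ) := by
  induction k using Nat.strong_induction_on with
  | _ k ih =>
  rcases k.even_or_odd with hk | hk
  · obtain ⟨j, rfl⟩ := hk.two_dvd
    rcases j.eq_zero_or_pos with rfl | hj
    · simp
    · obtain ⟨u, hu, hqu⟩ := exists_odd_preNormEDS_four_mul hb hc hd j
      push_cast
      rw [hqu, emultiplicity_mul Int.prime_two, emultiplicity_mul Int.prime_two,
        emultiplicity_mul Int.prime_two, emultiplicity_two_eq_zero_of_odd hu,
        ih j (by omega), add_zero]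
  · have odd_k : Odd (k : ℤ) := by exact_mod_cast hk
    rw [emultiplicity_two_eq_zero_of_odd odd_k, emultiplicity_two_eq_zero_of_odd]
    exact (odd_iff_of_modEq_four (preNormEDS_two_mul_modEq_four hb hc hd k)).2 odd_k

end TwoAdic

section TwoAdicNormEDS
variable {b c d : ℤ} (hb : Even b) (hc : c ≡ -1 [ZMOD 4]) (hd : d ≡ 2 [ZMOD 4])
include hb hc hd

lemma emultiplicity_two_normEDS_of_odd {n : ℕ} (hn : Odd n) :
    emultiplicity 2 (normEDS (2 * b) (2 ^ 2 * c) (2 ^ 3 * d) n) = ((n ^ 2 - 1) / 4 : ℕ) := by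
  rw [normEDS_pow_mul, if_neg (Nat.not_even_iff_odd.2 hn), mul_one,
    emultiplicity_mul Int.prime_two, emultiplicity_pow_self_of_prime Int.prime_two,
    emultiplicity_two_preNormEDS_of_odd (two_mul_pow_four_modEq_zero hb) hc hd
      (by exact_mod_cast hn), add_zero]

lemma emultiplicity_two_normEDS_two_mul {k : ℕ} (hk : k ≠ 0) :
    emultiplicity 2 (normEDS (2 * b) (2 ^ 2 * c) (2 ^ 3 * d) (2 * k : ℕ)) =
      (k ^ 2 : ℕ) + emultiplicity 2 (k : ℤ) + emultiplicity 2 b := by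
  have weight : ((2 * k) ^ 2 - 1) / 4 + 1 = k ^ 2 := by
    have : 0 < k ^ 2 := by positivity
    rw [mul_pow]
    omega
  rw [normEDS_pow_mul, if_pos (even_two_mul k), ← mul_assoc, emultiplicity_mul Int.prime_two,
    mul_right_comm, ← pow_succ, weight, emultiplicity_mul Int.prime_two,
    emultiplicity_pow_self_of_prime Int.prime_two, Nat.cast_mul, Nat.cast_ofNat,
    emultiplicity_two_preNormEDS_two_mul (two_mul_pow_four_modEq_zero hb) hc hd]

lemma padicValInt_two_normEDS_of_odd {n : ℤ} (hn : 0 < n) (odd_n : Odd n) :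
    (padicValInt 2 (normEDS (2 * b) (2 ^ 2 * c) (2 ^ 3 * d) n) : ℤ) = (n ^ 2 - 1) / 4 := by
  lift n to ℕ using hn.le
  have one_le_sq : 1 ≤ n ^ 2 := Nat.one_le_pow _ _ (by exact_mod_cast hn)
  rw [padicValInt_eq_of_emultiplicity_eq
    (emultiplicity_two_normEDS_of_odd hb hc hd ((Int.odd_coe_nat n).1 odd_n))]
  push_cast [one_le_sq]
  rfl

lemma padicValInt_two_normEDS_of_even (hb₀ : b ≠ 0) {n : ℤ} (hn : 0 < n) (even_n : Even n) :
    (padicValInt 2 (normEDS (2 * b) (2 ^ 2 * c) (2 ^ 3 * d) n) : ℤ) =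
      n ^ 2 / 4 + padicValInt 2 (n / 2) + padicValInt 2 b := by
  lift n to ℕ using hn.le
  obtain ⟨k, rfl⟩ := ((Int.even_coe_nat n).1 even_n).two_dvd
  have hk : k ≠ 0 := by
    rintro rfl
    simp at hn
  have half : ((2 * k : ℕ) : ℤ) / 2 = k := by omega
  have quarter : ((2 * k : ℕ) : ℤ) ^ 2 / 4 = k ^ 2 := by
    push_cast
    rw [mul_pow]
    omega
  have val_k : emultiplicity 2 (k : ℤ) = padicValInt 2 k :=
    emultiplicity_eq_padicValInt (p := 2) (by exact_mod_cast hk)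
  have val_b : emultiplicity 2 b = padicValInt 2 b := emultiplicity_eq_padicValInt (p := 2) hb₀
  have val_normEDS := emultiplicity_two_normEDS_two_mul hb hc hd hk
  rw [val_k, val_b] at val_normEDS
  rw [half, quarter, padicValInt_eq_of_emultiplicity_eq (p := 2) val_normEDS]
  push_cast
  rfl

end TwoAdicNormEDS

lemma evalEval_Ψ_eq_normEDS {R : Type*} [CommRing R] (W : WeierstrassCurve R) {x y : R}
    (h : W.toAffine.Equation x y) (n : ℤ) :
    (W.Ψ n).evalEval x y =
      normEDS (W.ψ₂.evalEval x y) (W.Ψ₃.eval x) (W.preΨ₄.eval x) n := by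
  have eval_Ψ₂Sq : W.Ψ₂Sq.eval x = W.ψ₂.evalEval x y ^ 2 := by
    rw [← Polynomial.evalEval_pow, W.ψ₂_sq, Polynomial.evalEval_add, Polynomial.evalEval_mul,
      h, mul_zero, add_zero, Polynomial.evalEval_C]
  have eval_preΨ : (W.preΨ n).eval x =
      preNormEDS (W.ψ₂.evalEval x y ^ 4) (W.Ψ₃.eval x) (W.preΨ₄.eval x) n := by
    rw [WeierstrassCurve.preΨ, ← Polynomial.coe_evalRingHom, map_preNormEDS]
    simp [eval_Ψ₂Sq, ← pow_mul]
  rw [WeierstrassCurve.Ψ, normEDS, Polynomial.evalEval_mul, Polynomial.evalEval_C, eval_preΨ]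
  split_ifs <;> simp

section QuarticTwist
open WeierstrassCurve

/-- The quartic twist `y² = x³ - D x` of `y² = x³ - x`; the congruent number curve `E_N` is the
case `D = N²`. -/
def quarticTwist {R : Type*} [CommRing R] (D : R) : WeierstrassCurve R :=
  { a₁ := 0, a₂ := 0, a₃ := 0, a₄ := -D, a₆ := 0 }

section CommRing
variable {R : Type*} [CommRing R] (D x y : R)

lemma quarticTwist_equation_iff :
    (quarticTwist D).toAffine.Equation x y ↔ y ^ 2 = x ^ 3 - D * x := by
  simp [Affine.equation_iff, quarticTwist, sub_eq_add_neg]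

lemma evalEval_ψ₂_quarticTwist : (quarticTwist D).ψ₂.evalEval x y = 2 * y := by
  simp only [ψ₂, Affine.evalEval_polynomialY, quarticTwist, zero_mul, add_zero]

lemma eval_Ψ₃_quarticTwist :
    (quarticTwist D).Ψ₃.eval x = 3 * x ^ 4 - 6 * D * x ^ 2 - D ^ 2 := by
  simp only [Ψ₃, b₂, b₄, b₆, b₈, quarticTwist, Polynomial.eval_add, Polynomial.eval_mul,
    Polynomial.eval_pow, Polynomial.eval_ofNat, Polynomial.eval_X, Polynomial.eval_C]
  ring

lemma eval_preΨ₄_quarticTwist :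
    (quarticTwist D).preΨ₄.eval x = 2 * (x ^ 2 + D) * (x ^ 4 - 6 * D * x ^ 2 + D ^ 2) := by
  simp only [preΨ₄, b₂, b₄, b₆, b₈, quarticTwist, Polynomial.eval_add, Polynomial.eval_mul,
    Polynomial.eval_pow, Polynomial.eval_ofNat, Polynomial.eval_X, Polynomial.eval_C]
  ring

end CommRing

section Int
variable {D x : ℤ}

lemma exists_eval_Ψ₃_quarticTwist (hD : D ≡ 1 [ZMOD 8]) (hx : Odd x) :
    ∃ c, c ≡ -1 [ZMOD 4] ∧ (quarticTwist D).Ψ₃.eval x = 2 ^ 2 * c := by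
  obtain ⟨s, hs⟩ := Int.eight_dvd_sq_sub_one_of_odd hx
  obtain ⟨t, ht⟩ := hD.symm.dvd
  refine ⟨48 * s ^ 2 - 96 * s * t - 16 * t ^ 2 - 16 * t - 1, ?_, ?_⟩
  · exact Int.modEq_iff_dvd.2 ⟨-(12 * s ^ 2 - 24 * s * t - 4 * t ^ 2 - 4 * t), by ring⟩
  · rw [eval_Ψ₃_quarticTwist, show D = 8 * t + 1 by linarith,
      show x ^ 4 = (x ^ 2) ^ 2 by ring, show x ^ 2 = 8 * s + 1 by linarith]
    ring

lemma exists_eval_preΨ₄_quarticTwist (hD : D ≡ 1 [ZMOD 8]) (hx : Odd x) :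
    ∃ d, d ≡ 2 [ZMOD 4] ∧ (quarticTwist D).preΨ₄.eval x = 2 ^ 3 * d := by
  obtain ⟨s, hs⟩ := Int.eight_dvd_sq_sub_one_of_odd hx
  obtain ⟨t, ht⟩ := hD.symm.dvd
  refine ⟨2 * (4 * s + 4 * t + 1) * (16 * (s - t) ^ 2 - (8 * s + 1) * (8 * t + 1)), ?_, ?_⟩
  · exact Int.modEq_iff_dvd.2 ⟨1 - 2 * (s + t) * (16 * (s - t) ^ 2 - (8 * s + 1) * (8 * t + 1)) -
      8 * (s - t) ^ 2 + 32 * s * t + 4 * s + 4 * t, by ring⟩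
  · rw [eval_preΨ₄_quarticTwist, show D = 8 * t + 1 by linarith,
      show x ^ 4 = (x ^ 2) ^ 2 by ring, show x ^ 2 = 8 * s + 1 by linarith]
    ring

lemma even_of_quarticTwist_equation {y : ℤ} (hD : D ≡ 1 [ZMOD 8]) (hx : Odd x)
    (h : (quarticTwist D).toAffine.Equation x y) : Even y := by
  have odd_D : Odd D := by rw [Int.odd_iff, hD.of_dvd (show (2 : ℤ) ∣ 8 by decide)]; rfl
  have even_sq : Even (y ^ 2) := by
    rw [(quarticTwist_equation_iff D x y).1 h]
    exact hx.pow.sub_odd (odd_D.mul hx)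
  exact (Int.even_pow.1 even_sq).1

end Int

lemma quarticTwist_equation_intCast_iff {R : Type*} [CommRing R] [CharZero R] (D x y : ℤ) :
    (quarticTwist (D : R)).toAffine.Equation (x : R) (y : R) ↔
      (quarticTwist D).toAffine.Equation x y := by
  rw [quarticTwist_equation_iff, quarticTwist_equation_iff]
  norm_cast

lemma ne_zero_of_two_zsmul_quarticTwist_ne_zero {F : Type*} [Field F] [DecidableEq F] {D x y : F}
    (h : (quarticTwist D).toAffine.Nonsingular x y)
    (h_two : (2 : ℤ) • Affine.Point.some _ _ h ≠ 0) : y ≠ 0 := by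
  rintro rfl
  refine h_two ((two_zsmul _).trans (Affine.Point.add_self_of_Y_eq ?_))
  simp [Affine.negY, quarticTwist]

theorem stmt5_general {D a b : ℤ} (hD : D ≡ 1 [ZMOD 8]) (ha : Odd a)
    (h : (quarticTwist D).toAffine.Equation a b) (hb : b ≠ 0) :
    (∀ n : ℤ, 1 ≤ n → Odd n →
      (padicValInt 2 (((quarticTwist D).Ψ n).evalEval a b) : ℤ) = (n ^ 2 - 1) / 4) ∧
    (∀ n : ℤ, 2 ≤ n → Even n →
      (padicValInt 2 (((quarticTwist D).Ψ n).evalEval a b) : ℤ) =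
        n ^ 2 / 4 + padicValInt 2 (n / 2) + padicValInt 2 b) := by
  obtain ⟨c, hc, eval_Ψ₃⟩ := exists_eval_Ψ₃_quarticTwist hD ha
  obtain ⟨d, hd, eval_preΨ₄⟩ := exists_eval_preΨ₄_quarticTwist hD ha
  have even_b : Even b := even_of_quarticTwist_equation hD ha h
  simp only [evalEval_Ψ_eq_normEDS _ h, evalEval_ψ₂_quarticTwist, eval_Ψ₃, eval_preΨ₄]
  exact ⟨fun n hn ↦ padicValInt_two_normEDS_of_odd even_b hc hd (by omega),
    fun n hn ↦ padicValInt_two_normEDS_of_even even_b hc hd hb (by omega)⟩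

end QuarticTwist

lemma sq_modEq_one_of_odd {n : ℤ} (hn : Odd n) : n ^ 2 ≡ 1 [ZMOD 8] :=
  (Int.modEq_iff_dvd.2 (Int.eight_dvd_sq_sub_one_of_odd hn)).symm

theorem stmt5 (N : ℕ) (hN : 0 < N) (hNodd : Odd N)
    (a b : ℤ) (haodd : Odd a)
    (h : (congruentCurve N).Nonsingular (a : ℚ) (b : ℚ))
    (hPtors : ∀ m : ℤ, 1 ≤ m →
      m • (WeierstrassCurve.Affine.Point.some _ _ h) ≠ 0) :
    (∀ n : ℤ, 1 ≤ n → Odd n →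
      (padicValInt 2 (psiEN N a b n) : ℤ) = (n ^ 2 - 1) / 4) ∧
    (∀ n : ℤ, 2 ≤ n → Even n →
      n ^ 2 / 4 + (padicValInt 2 b : ℤ) ≤ (padicValInt 2 (psiEN N a b n) : ℤ)) := by
  have hb : b ≠ 0 := by
    exact_mod_cast ne_zero_of_two_zsmul_quarticTwist_ne_zero (D := (N : ℚ) ^ 2) h
      (hPtors 2 one_le_two)
  obtain ⟨odd_case, even_case⟩ := stmt5_general
    (sq_modEq_one_of_odd (by exact_mod_cast hNodd : Odd (N : ℤ))) haodd
    ((quarticTwist_equation_intCast_iff _ _ _).1 (by exact_mod_cast h.1)) hb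
  refine ⟨odd_case, fun n hn even_n ↦ ?_⟩
  calc n ^ 2 / 4 + (padicValInt 2 b : ℤ)
      ≤ n ^ 2 / 4 + (padicValInt 2 (n / 2) : ℤ) + (padicValInt 2 b : ℤ) := by gcongr; simp
    _ = (padicValInt 2 (psiEN N a b n) : ℤ) := (even_case n hn even_n).symm
end
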